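/- arXiv:2110.06489 — 5 statements merged into one kernel-verified Lean document; each statement's English description precedes it below -/
import Mathlib

section
/- Let G = (V,E) be an infinite, connected, locally finite, simple graph with maximum degree at most 3 and nonnegative Ricci curvature (κ(u,v) ≥ 0 for every edge {u,v}). Then every positive harmonic function on G is constant. -/
open SimpleGraph

variable {V : Type*}

/-- Combinatorial (unnormalized) graph Laplacian. -/
def lapl (G : SimpleGraph V) [G.LocallyFinite] (f : V → ℝ) (x : V) : ℝ :=
  ∑ y ∈ G.neighborFinset x, (f y - f x)

/-- Lin-Lu-Yau-Ollivier Ricci curvature (limit-free definition):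
`κ(u,v) = inf { Δf(u) − Δf(v) : f 1-Lipschitz w.r.t. graph distance, f v − f u = 1 }`. -/
noncomputable def ricci (G : SimpleGraph V) [G.LocallyFinite] (u v : V) : ℝ :=
  sInf { r : ℝ | ∃ f : V → ℝ,
    (∀ x y : V, |f x - f y| ≤ (G.dist x y : ℝ)) ∧ f v - f u = 1 ∧
    r = lapl G f u - lapl G f v }

/-- Nonnegative Ricci curvature on every edge. -/
def NonnegRicci (G : SimpleGraph V) [G.LocallyFinite] : Prop :=
  ∀ u v : V, G.Adj u v → 0 ≤ ricci G u v

open scoped Classical in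
/-- The neighbours of `x` one step farther from `o`. -/
noncomputable def outerNbrs (G : SimpleGraph V) [G.LocallyFinite] (o x : V) : Finset V :=
  {y ∈ G.neighborFinset x | G.dist o y = G.dist o x + 1}

open scoped Classical in
/-- The neighbours of `x` one step closer to `o`. -/
noncomputable def innerNbrs (G : SimpleGraph V) [G.LocallyFinite] (o x : V) : Finset V :=
  {y ∈ G.neighborFinset x | G.dist o y + 1 = G.dist o x}

open scoped Classical in
/-- The sphere of radius `r` around `o`, as a finset. -/
noncomputable def sphereFinset (G : SimpleGraph V) [G.LocallyFinite] (o : V) : ℕ → Finset V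
  | 0 => {o}
  | r + 1 => {x ∈ (sphereFinset G o r).biUnion fun y => G.neighborFinset y | G.dist o x = r + 1}

/-- A vertex other than `o` with more outer than inner neighbours. -/
def IsBranching (G : SimpleGraph V) [G.LocallyFinite] (o x : V) : Prop :=
  0 < G.dist o x ∧ (innerNbrs G o x).card < (outerNbrs G o x).card

section Geometry

lemma abs_dist_sub_dist_le {G : SimpleGraph V} (hconn : G.Connected) (w x y : V) :
    |(G.dist w x : ℝ) - G.dist w y| ≤ G.dist x y := by
  have h₁ := hconn.dist_triangle (u := w) (v := y) (w := x)
  have h₂ := hconn.dist_triangle (u := w) (v := x) (w := y)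
  rw [dist_comm (u := y)] at h₁
  rw [abs_le]
  constructor
  · have : (G.dist w y : ℝ) ≤ G.dist w x + G.dist x y := mod_cast h₂
    linarith
  · have : (G.dist w x : ℝ) ≤ G.dist w y + G.dist x y := mod_cast h₁
    linarith

variable {G : SimpleGraph V} [G.LocallyFinite] {o : V}

@[simp]
lemma mem_outerNbrs {x y : V} :
    y ∈ outerNbrs G o x ↔ G.Adj x y ∧ G.dist o y = G.dist o x + 1 := by
  simp [outerNbrs]

@[simp]
lemma mem_innerNbrs {x y : V} :
    y ∈ innerNbrs G o x ↔ G.Adj x y ∧ G.dist o y + 1 = G.dist o x := by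
  simp [innerNbrs]

lemma innerNbrs_nonempty (hconn : G.Connected) {x : V} (hx : 0 < G.dist o x) :
    (innerNbrs G o x).Nonempty := by
  obtain ⟨p, hp⟩ := hconn.exists_walk_length_eq_dist x o
  cases p with
  | nil => simp at hx
  | @cons _ y _ h q =>
    refine ⟨y, mem_innerNbrs.2 ⟨h, ?_⟩⟩
    have hq := dist_le q
    have htri := hconn.dist_triangle (u := o) (v := y) (w := x)
    rw [dist_eq_one_iff_adj.2 h.symm] at htri
    rw [Walk.length_cons] at hp
    rw [dist_comm (u := y)] at hq
    rw [dist_comm (u := x)] at hp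
    omega

lemma mem_sphereFinset (hconn : G.Connected) {r : ℕ} {x : V} :
    x ∈ sphereFinset G o r ↔ G.dist o x = r := by
  induction r generalizing x with
  | zero => simp [sphereFinset, hconn.dist_eq_zero_iff, eq_comm]
  | succ r ih =>
    simp only [sphereFinset, Finset.mem_filter, Finset.mem_biUnion, mem_neighborFinset,
      and_iff_right_iff_imp, ih]
    intro hx
    obtain ⟨y, hy⟩ := innerNbrs_nonempty hconn (o := o) (x := x) (by omega)
    rw [mem_innerNbrs] at hy
    exact ⟨y, by omega, hy.1.symm⟩

lemma card_innerNbrs_add_card_outerNbrs_le (x : V) :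
    (innerNbrs G o x).card + (outerNbrs G o x).card ≤ G.degree x := by
  classical
  rw [← Finset.card_union_of_disjoint, ← card_neighborFinset_eq_degree]
  · apply Finset.card_le_card
    intro y hy
    rw [Finset.mem_union, mem_innerNbrs, mem_outerNbrs] at hy
    rw [mem_neighborFinset]
    tauto
  · rw [Finset.disjoint_left]
    intro y hy hy'
    rw [mem_innerNbrs] at hy
    rw [mem_outerNbrs] at hy'
    omega

lemma lapl_dist_eq (x : V) :
    lapl G (fun y => (G.dist o y : ℝ)) x =
      (outerNbrs G o x).card - (innerNbrs G o x).card := by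
  classical
  have hterm : ∀ y ∈ G.neighborFinset x, ((G.dist o y : ℝ) - G.dist o x) =
      (if G.dist o y = G.dist o x + 1 then 1 else 0) -
        (if G.dist o y + 1 = G.dist o x then 1 else 0) := by
    intro y hy
    rw [mem_neighborFinset] at hy
    have h := hy.diff_dist_adj (u := o)
    obtain h | h | h : G.dist o y = G.dist o x ∨ G.dist o y = G.dist o x + 1 ∨
        G.dist o x = G.dist o y + 1 := by omega
    · simp [h]
    · rw [if_pos h, if_neg (by omega), h]
      push_cast; ring
    · rw [if_neg (by omega), if_pos h.symm, h]
      push_cast; ring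
  rw [lapl, Finset.sum_congr rfl hterm, Finset.sum_sub_distrib, Finset.sum_boole,
    Finset.sum_boole, outerNbrs, innerNbrs]

lemma abs_lapl_le_degree {f : V → ℝ} (hf : ∀ x y : V, |f x - f y| ≤ (G.dist x y : ℝ)) (x : V) :
    |lapl G f x| ≤ G.degree x := by
  rw [lapl, ← card_neighborFinset_eq_degree]
  refine (Finset.abs_sum_le_sum_abs _ _).trans ?_
  refine (Finset.sum_le_card_nsmul _ _ 1 fun y hy => ?_).trans (by simp)
  rw [mem_neighborFinset] at hy
  simpa [dist_eq_one_iff_adj.2 hy.symm] using hf y x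

lemma NonnegRicci.lapl_le_lapl (hric : NonnegRicci G) {u v : V} (huv : G.Adj u v) {f : V → ℝ}
    (hf : ∀ x y : V, |f x - f y| ≤ (G.dist x y : ℝ)) (hfuv : f v - f u = 1) :
    lapl G f v ≤ lapl G f u := by
  have hbdd : BddBelow { r : ℝ | ∃ f : V → ℝ,
      (∀ x y : V, |f x - f y| ≤ (G.dist x y : ℝ)) ∧ f v - f u = 1 ∧
      r = lapl G f u - lapl G f v } := by
    refine ⟨-(G.degree u + G.degree v), ?_⟩
    rintro r ⟨g, hg, -, rfl⟩
    have hu := (abs_le.1 (abs_lapl_le_degree hg u)).1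
    have hv := (abs_le.1 (abs_lapl_le_degree hg v)).2
    linarith
  have := (hric u v huv).trans (csInf_le hbdd ⟨f, hf, hfuv, rfl⟩)
  linarith

lemma IsBranching.card_innerNbrs (hconn : G.Connected) (hdeg : ∀ v : V, G.degree v ≤ 3) {x : V}
    (hx : IsBranching G o x) : (innerNbrs G o x).card = 1 := by
  have h₁ := (innerNbrs_nonempty (o := o) hconn hx.1).card_pos
  have h₂ := card_innerNbrs_add_card_outerNbrs_le (G := G) (o := o) x
  have h₃ := hdeg x
  have h₄ : (innerNbrs G o x).card < (outerNbrs G o x).card := hx.2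
  omega

lemma IsBranching.card_outerNbrs (hconn : G.Connected) (hdeg : ∀ v : V, G.degree v ≤ 3) {x : V}
    (hx : IsBranching G o x) : (outerNbrs G o x).card = 2 := by
  have h₁ := hx.card_innerNbrs hconn hdeg
  have h₂ := card_innerNbrs_add_card_outerNbrs_le (G := G) (o := o) x
  have h₃ := hdeg x
  have h₄ : (innerNbrs G o x).card < (outerNbrs G o x).card := hx.2
  omega

/-- Branching propagates towards `o`, by monotonicity of the Laplacian of the distance. -/
lemma IsBranching.of_mem_outerNbrs (hconn : G.Connected) (hric : NonnegRicci G) {u v : V}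
    (hu : 0 < G.dist o u) (huv : v ∈ outerNbrs G o u) (hv : IsBranching G o v) :
    IsBranching G o u := by
  rw [mem_outerNbrs] at huv
  have h := hric.lapl_le_lapl huv.1 (abs_dist_sub_dist_le hconn o) (by rw [huv.2]; simp)
  rw [lapl_dist_eq, lapl_dist_eq] at h
  have h' : ((innerNbrs G o v).card : ℝ) < (outerNbrs G o v).card := mod_cast hv.2
  refine ⟨hu, ?_⟩
  have : ((innerNbrs G o u).card : ℝ) < (outerNbrs G o u).card := by linarith
  exact_mod_cast this

/-- Inner neighbours of a branching vertex are unique. -/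
lemma eq_of_mem_innerNbrs (hconn : G.Connected) (hdeg : ∀ v : V, G.degree v ≤ 3) {x y z : V}
    (hx : IsBranching G o x) (hy : y ∈ innerNbrs G o x) (hz : z ∈ innerNbrs G o x) : y = z :=
  Finset.card_le_one.1 (hx.card_innerNbrs hconn hdeg).le y hy z hz

/-- A branching vertex whose inner neighbour is branching has at most one branching outer
neighbour. -/
lemma IsBranching.outerNbrs_unique (hconn : G.Connected) (hdeg : ∀ v : V, G.degree v ≤ 3)
    (hric : NonnegRicci G) {u v c d : V} (hu : IsBranching G o u) (hv : IsBranching G o v)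
    (huv : v ∈ outerNbrs G o u) (hc : IsBranching G o c) (hd : IsBranching G o d)
    (hvc : c ∈ outerNbrs G o v) (hvd : d ∈ outerNbrs G o v) : c = d := by
  classical
  by_contra hcd
  obtain ⟨p, hp⟩ := innerNbrs_nonempty hconn hu.1
  obtain ⟨w, hw, hwv⟩ := Finset.exists_mem_ne
    (by rw [hu.card_outerNbrs hconn hdeg]; norm_num : 1 < (outerNbrs G o u).card) v
  rw [mem_outerNbrs] at huv hvc hvd hw
  rw [mem_innerNbrs] at hp
  have hnot : ∀ e : V, IsBranching G o e → G.Adj v e → G.dist o e = G.dist o v + 1 →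
      ¬ G.Adj w e := by
    intro e he hve hdist hwe
    refine hwv (eq_of_mem_innerNbrs hconn hdeg he ?_ ?_) <;> rw [mem_innerNbrs]
    · exact ⟨hwe.symm, by omega⟩
    · exact ⟨hve.symm, by omega⟩
  have hneq : ∀ {a b : V}, G.dist o a ≠ G.dist o b → a ≠ b := fun h hab => h (by rw [hab])
  have hpv : p ≠ v := hneq (by omega)
  have hpw : p ≠ w := hneq (by omega)
  have huc : u ≠ c := hneq (by omega)
  have hud : u ≠ d := hneq (by omega)
  have hwc : w ≠ c := hneq (by omega)
  have hwd : w ≠ d := hneq (by omega)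
  have hNu : G.neighborFinset u = {p, v, w} := by
    symm
    apply Finset.eq_of_subset_of_card_le
    · intro z hz
      simp only [Finset.mem_insert, Finset.mem_singleton] at hz
      rw [mem_neighborFinset]
      rcases hz with rfl | rfl | rfl
      exacts [hp.1, huv.1, hw.1]
    · rw [card_neighborFinset_eq_degree, Finset.card_eq_three.2 ⟨p, v, w, hpv, hpw, hwv.symm, rfl⟩]
      exact hdeg u
  have hNv : G.neighborFinset v = {u, c, d} := by
    symm
    apply Finset.eq_of_subset_of_card_le
    · intro z hz
      simp only [Finset.mem_insert, Finset.mem_singleton] at hz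
      rw [mem_neighborFinset]
      rcases hz with rfl | rfl | rfl
      exacts [huv.1.symm, hvc.1, hvd.1]
    · rw [card_neighborFinset_eq_degree, Finset.card_eq_three.2 ⟨u, c, d, huc, hud, hcd, rfl⟩]
      exact hdeg v
  -- Lowering the distance function around `w` violates the curvature bound on the edge `uv`.
  let g : V → ℝ := fun x => min (G.dist o x : ℝ) (G.dist w x + G.dist o u)
  have hg : ∀ x y : V, |g x - g y| ≤ (G.dist x y : ℝ) := by
    intro x y
    refine (abs_min_sub_min_le_max _ _ _ _).trans (max_le (abs_dist_sub_dist_le hconn o x y) ?_)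
    simpa using abs_dist_sub_dist_le hconn w x y
  have hgu : g u = G.dist o u := min_eq_left (by simp)
  have hgw : g w ≤ G.dist o u := (min_le_right _ _).trans (by simp)
  have hgp : g p ≤ G.dist o u - 1 := by
    refine (min_le_left _ _).trans ?_
    rw [← hp.2]; simp
  have hgv : g v = G.dist o u + 1 := by
    have : 1 ≤ G.dist w v := hconn.pos_dist_of_ne hwv
    have : (1 : ℝ) ≤ G.dist w v := mod_cast this
    simp only [g, huv.2]
    rw [min_eq_left (by push_cast; linarith)]
    simp
  have hg_outer : ∀ e : V, w ≠ e → ¬ G.Adj w e → G.dist o e = G.dist o v + 1 →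
      g e = G.dist o u + 2 := by
    intro e hwe hnadj hdist
    have : 2 ≤ G.dist w e := hconn.one_lt_dist_of_ne_of_not_adj hwe hnadj
    have : (2 : ℝ) ≤ G.dist w e := mod_cast this
    simp only [g, hdist, huv.2]
    rw [min_eq_left (by push_cast; linarith)]
    push_cast; ring
  have hgc := hg_outer c hwc (hnot c hc hvc.1 hvc.2) hvc.2
  have hgd := hg_outer d hwd (hnot d hd hvd.1 hvd.2) hvd.2
  have key := hric.lapl_le_lapl huv.1 hg (by rw [hgv, hgu]; ring)
  rw [lapl, lapl, hNu, hNv, Finset.sum_insert (by simp [huc, hud]), Finset.sum_pair hcd,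
    Finset.sum_insert (by simp [hpv, hpw]), Finset.sum_pair hwv.symm] at key
  linarith

open scoped Classical in
lemma card_branching_sphere_le (hconn : G.Connected) (hdeg : ∀ v : V, G.degree v ≤ 3)
    (hric : NonnegRicci G) {r : ℕ} (hr : 2 ≤ r) :
    (Finset.card {x ∈ sphereFinset G o (r + 1) | IsBranching G o x}) ≤
      Finset.card {x ∈ sphereFinset G o r | IsBranching G o x} := by
  have hpred : ∀ (k : ℕ) (x : V), 1 ≤ k → IsBranching G o x → G.dist o x = k + 1 →
      ∃ y, IsBranching G o y ∧ G.dist o y = k ∧ x ∈ outerNbrs G o y := by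
    intro k x hk hx hxk
    obtain ⟨y, hy⟩ := innerNbrs_nonempty hconn hx.1
    rw [mem_innerNbrs] at hy
    have hxy : x ∈ outerNbrs G o y := mem_outerNbrs.2 ⟨hy.1.symm, hy.2.symm⟩
    exact ⟨y, hx.of_mem_outerNbrs hconn hric (by omega) hxy, by omega, hxy⟩
  refine Finset.card_le_card_of_forall_subsingleton (fun x y => x ∈ outerNbrs G o y) ?_ ?_
  · intro x hx
    rw [Finset.mem_filter, mem_sphereFinset hconn] at hx
    obtain ⟨y, hy, hyr, hxy⟩ := hpred r x (by omega) hx.2 hx.1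
    exact ⟨y, by rw [Finset.mem_filter, mem_sphereFinset hconn]; exact ⟨hyr, hy⟩, hxy⟩
  · intro v hv c hc d hd
    simp only [Finset.mem_filter, mem_sphereFinset hconn] at hv
    simp only [Finset.mem_filter, Set.mem_ofPred_eq] at hc hd
    obtain ⟨u, hu, -, huv⟩ := hpred (r - 1) v (by omega) hv.2 (by omega)
    exact hu.outerNbrs_unique hconn hdeg hric hv.2 huv hc.1.2 hd.1.2 hc.2 hd.2

lemma sum_card_outerNbrs_eq (hconn : G.Connected) (r : ℕ) :
    ∑ x ∈ sphereFinset G o r, (outerNbrs G o x).card =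
      ∑ x ∈ sphereFinset G o (r + 1), (innerNbrs G o x).card := by
  classical
  convert Finset.sum_card_bipartiteAbove_eq_sum_card_bipartiteBelow (s := sphereFinset G o r)
    (t := sphereFinset G o (r + 1)) G.Adj using 3 with x hx x hx
  · ext y
    rw [mem_sphereFinset hconn] at hx
    simp [Finset.mem_bipartiteAbove, mem_sphereFinset hconn, hx, and_comm]
  · ext y
    rw [mem_sphereFinset hconn] at hx
    simp [Finset.mem_bipartiteBelow, mem_sphereFinset hconn, hx, and_comm, G.adj_comm]

/-- The number of edges leaving the ball of radius `r` grows at most linearly in `r`. -/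
lemma exists_sum_card_outerNbrs_le (hconn : G.Connected) (hdeg : ∀ v : V, G.degree v ≤ 3)
    (hric : NonnegRicci G) :
    ∃ C : ℕ, ∀ r : ℕ, ∑ x ∈ sphereFinset G o r, (outerNbrs G o x).card ≤ C * (r + 1) := by
  classical
  let t : ℕ → ℕ := fun r => Finset.card {x ∈ sphereFinset G o r | IsBranching G o x}
  have ht : ∀ r, t r ≤ t 0 + t 1 + t 2 := by
    intro r
    match r with
    | 0 => omega
    | 1 => omega
    | r + 2 =>
      induction r with
      | zero => exact Nat.le_add_left _ _
      | succ r ih => exact (card_branching_sphere_le hconn hdeg hric (by omega)).trans ih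
  have hstep : ∀ r, ∑ x ∈ sphereFinset G o (r + 1), (outerNbrs G o x).card ≤
      ∑ x ∈ sphereFinset G o r, (outerNbrs G o x).card + t (r + 1) := by
    intro r
    rw [sum_card_outerNbrs_eq hconn r]
    simp only [t, Finset.card_filter]
    rw [← Finset.sum_add_distrib]
    refine Finset.sum_le_sum fun x hx => ?_
    rw [mem_sphereFinset hconn] at hx
    split_ifs with hb
    · rw [hb.card_innerNbrs hconn hdeg, hb.card_outerNbrs hconn hdeg]
    · exact not_lt.1 fun h => hb ⟨by omega, h⟩
  refine ⟨∑ x ∈ sphereFinset G o 0, (outerNbrs G o x).card + (t 0 + t 1 + t 2), fun r => ?_⟩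
  induction r with
  | zero => simp
  | succ r ih =>
    have h₁ := hstep r
    have h₂ := ht (r + 1)
    rw [mul_add _ (r + 1) 1, mul_one]
    omega

end Geometry

section Analysis

variable {G : SimpleGraph V} [G.LocallyFinite] {o : V}

open scoped Classical in
/-- A Caccioppoli-type inequality for positive harmonic functions. -/
lemma sq_div_le_energy {h φ : V → ℝ} (hharm : ∀ x : V, lapl G h x = 0) (hpos : ∀ x : V, 0 < h x)
    {B : Finset V} (hB : ∀ x y : V, φ x ≠ 0 → G.Adj x y → y ∈ B) {a b : V} (hab : G.Adj a b)
    (ha : a ∈ B) (hb : b ∈ B) :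
    (φ a * h b - φ b * h a) ^ 2 / (h a * h b) ≤
      ∑ x ∈ B, ∑ y ∈ B, if G.Adj x y then (φ x - φ y) ^ 2 else 0 := by
  let F : V → V → ℝ := fun x y => if G.Adj x y then φ x ^ 2 / h x * (h y - h x) else 0
  let Q : V → V → ℝ := fun x y =>
    if G.Adj x y then (φ x * h y - φ y * h x) ^ 2 / (h x * h y) else 0
  have hF : ∀ x, ∑ y ∈ B, F x y = 0 := by
    intro x
    by_cases hx : φ x = 0
    · simp [F, hx]
    · have hN : {y ∈ B | G.Adj x y} = G.neighborFinset x := by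
        ext y
        simpa using hB x y hx
      simp only [F]
      rw [← Finset.sum_filter, hN, ← Finset.mul_sum]
      have := hharm x
      rw [lapl] at this
      rw [this, mul_zero]
  have hQ : ∀ x y, 0 ≤ Q x y := by
    intro x y
    have := hpos x
    have := hpos y
    simp only [Q]
    split_ifs <;> positivity
  have hQF : ∀ x y, Q x y = (if G.Adj x y then (φ x - φ y) ^ 2 else 0) + F x y + F y x := by
    intro x y
    have hx := (hpos x).ne'
    have hy := (hpos y).ne'
    simp only [Q, F, G.adj_comm y x]
    split_ifs
    · field_simp
      ring
    · simp
  calc (φ a * h b - φ b * h a) ^ 2 / (h a * h b) = Q a b := by simp [Q, hab]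
    _ ≤ ∑ y ∈ B, Q a y := Finset.single_le_sum (fun y _ => hQ a y) hb
    _ ≤ ∑ x ∈ B, ∑ y ∈ B, Q x y :=
        Finset.single_le_sum (f := fun x => ∑ y ∈ B, Q x y)
          (fun x _ => Finset.sum_nonneg fun y _ => hQ x y) ha
    _ = (∑ x ∈ B, ∑ y ∈ B, if G.Adj x y then (φ x - φ y) ^ 2 else 0) +
          ∑ x ∈ B, ∑ y ∈ B, F x y + ∑ x ∈ B, ∑ y ∈ B, F y x := by
        simp only [hQF, Finset.sum_add_distrib]
    _ = _ := by
        rw [Finset.sum_comm (f := fun x y => F y x)]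
        simp [hF]

open scoped Classical in
/-- The energy of a radial function, summed over spheres. -/
lemma energy_radial_le (hconn : G.Connected) (g : ℕ → ℝ) (N : ℕ) :
    (∑ x ∈ (Finset.range N).biUnion (sphereFinset G o),
      ∑ y ∈ (Finset.range N).biUnion (sphereFinset G o),
        if G.Adj x y then (g (G.dist o x) - g (G.dist o y)) ^ 2 else 0) ≤
      2 * ∑ r ∈ Finset.range N,
        (∑ x ∈ sphereFinset G o r, ((outerNbrs G o x).card : ℝ)) * (g r - g (r + 1)) ^ 2 := by
  set B := (Finset.range N).biUnion (sphereFinset G o)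
  let P : V → V → ℝ := fun x y =>
    if y ∈ outerNbrs G o x then (g (G.dist o x) - g (G.dist o x + 1)) ^ 2 else 0
  have hP : ∀ x y, (if G.Adj x y then (g (G.dist o x) - g (G.dist o y)) ^ 2 else 0) ≤
      P x y + P y x := by
    intro x y
    have hP₀ : ∀ x y, 0 ≤ P x y := fun x y => by
      simp only [P]
      split_ifs <;> positivity
    by_cases hxy : G.Adj x y
    · rw [if_pos hxy]
      have h := hxy.diff_dist_adj (u := o)
      obtain h | h | h : G.dist o y = G.dist o x ∨ G.dist o y = G.dist o x + 1 ∨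
        G.dist o x = G.dist o y + 1 := by omega
      · simpa [h] using add_nonneg (hP₀ x y) (hP₀ y x)
      · refine le_add_of_le_of_nonneg ?_ (hP₀ y x)
        simp [P, hxy, h]
      · refine le_add_of_nonneg_of_le (hP₀ x y) ?_
        simp only [P, mem_outerNbrs, hxy.symm, h, true_and, if_true]
        exact (sub_sq_comm _ _).le
    · rw [if_neg hxy]
      exact add_nonneg (hP₀ x y) (hP₀ y x)
  have hrow : ∀ x, ∑ y ∈ B, P x y ≤
      (outerNbrs G o x).card * (g (G.dist o x) - g (G.dist o x + 1)) ^ 2 := by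
    intro x
    simp only [P]
    rw [← Finset.sum_filter, Finset.sum_const, nsmul_eq_mul]
    gcongr
    intro y hy
    exact (Finset.mem_filter.1 hy).2
  have hdisj : Set.PairwiseDisjoint (Finset.range N : Set ℕ) (sphereFinset G o) := by
    intro r _ s _ hrs
    rw [Function.onFun, Finset.disjoint_left]
    intro x hx hx'
    rw [mem_sphereFinset hconn] at hx hx'
    exact hrs (hx.symm.trans hx')
  calc _ ≤ ∑ x ∈ B, ∑ y ∈ B, (P x y + P y x) :=
        Finset.sum_le_sum fun x _ => Finset.sum_le_sum fun y _ => hP x y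
    _ = 2 * ∑ x ∈ B, ∑ y ∈ B, P x y := by
        simp only [Finset.sum_add_distrib]
        rw [Finset.sum_comm (f := fun x y => P y x), two_mul]
    _ ≤ 2 * ∑ x ∈ B, (outerNbrs G o x).card * (g (G.dist o x) - g (G.dist o x + 1)) ^ 2 := by
        gcongr with x
        exact hrow x
    _ = _ := by
        rw [Finset.sum_biUnion hdisj]
        congr 1
        refine Finset.sum_congr rfl fun r _ => ?_
        rw [Finset.sum_mul]
        refine Finset.sum_congr rfl fun x hx => ?_
        rw [(mem_sphereFinset hconn).1 hx]

/-- On a connected graph whose spheres have linearly bounded outer boundary, positive harmonic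
functions agree on adjacent vertices. -/
lemma eq_of_adj_of_linear_boundary (hconn : G.Connected) {C : ℕ}
    (hC : ∀ r : ℕ, ∑ x ∈ sphereFinset G o r, (outerNbrs G o x).card ≤ C * (r + 1))
    {h : V → ℝ} (hharm : ∀ x : V, lapl G h x = 0) (hpos : ∀ x : V, 0 < h x) {a b : V}
    (hab : G.Adj a b) : h a = h b := by
  classical
  let H : ℕ → ℝ := fun n => ∑ i ∈ Finset.range n, 1 / ((i : ℝ) + 1)
  have hHtop : Filter.Tendsto H Filter.atTop Filter.atTop :=
    Real.tendsto_sum_range_one_div_nat_succ_atTop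
  let g : ℕ → ℕ → ℝ := fun N r => 1 - H (min r N) / H N
  have hH : ∀ N, 0 < N → 0 < H N := fun N hN =>
    Finset.sum_pos (fun i _ => by positivity) (Finset.nonempty_range_iff.2 hN.ne')
  have hg_zero : ∀ N, 0 < N → ∀ r, N ≤ r → g N r = 0 := by
    intro N hN r hr
    simp only [g]
    rw [min_eq_right hr, div_self (hH N hN).ne', sub_self]
  have hg_step : ∀ N r, r < N → g N r - g N (r + 1) = 1 / ((r : ℝ) + 1) / H N := by
    intro N r hr
    have hsucc : H (r + 1) = H r + 1 / ((r : ℝ) + 1) := Finset.sum_range_succ _ _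
    simp only [g]
    rw [min_eq_left hr.le, min_eq_left hr, hsucc]
    ring
  have hg_lim : ∀ r, Filter.Tendsto (fun N => g N r) Filter.atTop (nhds 1) := by
    intro r
    have h₁ : Filter.Tendsto (fun N => 1 - H r / H N) Filter.atTop (nhds (1 - 0)) :=
      tendsto_const_nhds.sub (hHtop.const_div_atTop _)
    rw [sub_zero] at h₁
    refine h₁.congr' ?_
    filter_upwards [Filter.eventually_ge_atTop r] with N hN
    simp only [g]
    rw [min_eq_left hN]
  have henergy : ∀ N, 0 < N → ∑ r ∈ Finset.range (N + 1),
      (∑ x ∈ sphereFinset G o r, ((outerNbrs G o x).card : ℝ)) * (g N r - g N (r + 1)) ^ 2 ≤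
        C / H N := by
    intro N hN
    have hHN := hH N hN
    rw [Finset.sum_range_succ, hg_zero N hN N le_rfl, hg_zero N hN (N + 1) (Nat.le_succ N)]
    have hterm : ∀ r ∈ Finset.range N,
        (∑ x ∈ sphereFinset G o r, ((outerNbrs G o x).card : ℝ)) * (g N r - g N (r + 1)) ^ 2 ≤
          C / H N ^ 2 * (1 / ((r : ℝ) + 1)) := by
      intro r hr
      have hCr : (∑ x ∈ sphereFinset G o r, ((outerNbrs G o x).card : ℝ)) ≤ C * ((r : ℝ) + 1) :=
        mod_cast hC r
      rw [hg_step N r (Finset.mem_range.1 hr)]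
      refine (mul_le_mul_of_nonneg_right hCr (sq_nonneg _)).trans_eq ?_
      field_simp
    refine (add_le_add_left (Finset.sum_le_sum hterm) _).trans_eq ?_
    rw [← Finset.mul_sum]
    change (C : ℝ) / H N ^ 2 * H N + _ = _
    field_simp
    ring
  have hbound : ∀ᶠ N in Filter.atTop,
      (g N (G.dist o a) * h b - g N (G.dist o b) * h a) ^ 2 / (h a * h b) ≤ 2 * (C / H N) := by
    filter_upwards [Filter.eventually_gt_atTop 0, Filter.eventually_ge_atTop (G.dist o a),
      Filter.eventually_ge_atTop (G.dist o b)] with N hN hNa hNb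
    have hmem : ∀ x, x ∈ (Finset.range (N + 1)).biUnion (sphereFinset G o) ↔ G.dist o x ≤ N := by
      intro x
      simp [mem_sphereFinset hconn]
    refine (sq_div_le_energy (φ := fun x => g N (G.dist o x)) hharm hpos ?_ hab
      ((hmem a).2 hNa) ((hmem b).2 hNb)).trans ((energy_radial_le hconn (g N) (N + 1)).trans
        (mul_le_mul_of_nonneg_left (henergy N hN) zero_le_two))
    intro x y hx hxy
    have hlt : G.dist o x < N := not_le.1 fun hle => hx (hg_zero N hN _ hle)
    have := hxy.diff_dist_adj (u := o)
    rw [hmem]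
    omega
  have hlim_left : Filter.Tendsto (fun N =>
      (g N (G.dist o a) * h b - g N (G.dist o b) * h a) ^ 2 / (h a * h b)) Filter.atTop
      (nhds ((1 * h b - 1 * h a) ^ 2 / (h a * h b))) :=
    (((((hg_lim _).mul_const _).sub ((hg_lim _).mul_const _)).pow 2).div_const _)
  have hlim_right : Filter.Tendsto (fun N => 2 * (C / H N)) Filter.atTop (nhds (2 * 0)) :=
    (hHtop.const_div_atTop _).const_mul _
  have hle := le_of_tendsto_of_tendsto hlim_left hlim_right hbound
  have hprod := mul_pos (hpos a) (hpos b)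
  rw [one_mul, one_mul, mul_zero, div_le_iff₀ hprod, zero_mul] at hle
  have hzero : h b - h a = 0 := pow_eq_zero_iff two_ne_zero |>.1 (le_antisymm hle (sq_nonneg _))
  linarith

end Analysis

/-- Every positive harmonic function on an infinite, connected, locally
finite simple graph with maximum degree at most 3 and nonnegative Ricci curvature is
constant. -/
theorem positive_harmonic_constant (G : SimpleGraph V) [G.LocallyFinite] [Infinite V]
    (hconn : G.Connected) (hdeg : ∀ v : V, G.degree v ≤ 3) (hric : NonnegRicci G)
    (f : V → ℝ) (hharm : ∀ x : V, lapl G f x = 0) (hpos : ∀ x : V, 0 < f x) :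
    ∀ x y : V, f x = f y := by
  intro x y
  obtain ⟨C, hC⟩ := exists_sum_card_outerNbrs_le (o := x) hconn hdeg hric
  have hadj : ∀ a b : V, G.Adj a b → f a = f b := fun a b hab =>
    eq_of_adj_of_linear_boundary hconn hC hharm hpos hab
  obtain ⟨p⟩ := hconn.preconnected x y
  clear hC
  induction p with
  | nil => rfl
  | cons h _ ih => exact (hadj _ _ h).trans ih
end

section
/- Let G = (V,E) be a connected, locally finite, simple graph with maximum degree at most 3 (and at least two vertices). Then the combinatorial Ricci curvature κ_C(u,v) is nonnegative for every edge {u,v} if and only if the normalized Ricci curvature κ_N(u,v) is nonnegative for every edge {u,v}. -/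
open SimpleGraph

variable {V : Type*}

/-- Normalized graph Laplacian. -/
noncomputable def laplN (G : SimpleGraph V) [G.LocallyFinite] (f : V → ℝ) (x : V) : ℝ :=
  (1 / (G.degree x : ℝ)) * ∑ y ∈ G.neighborFinset x, (f y - f x)

/-- Normalized Lin-Lu-Yau-Ollivier Ricci curvature (limit-free definition). -/
noncomputable def ricciN (G : SimpleGraph V) [G.LocallyFinite] (u v : V) : ℝ :=
  sInf { r : ℝ | ∃ f : V → ℝ,
    (∀ x y : V, |f x - f y| ≤ (G.dist x y : ℝ)) ∧ f v - f u = 1 ∧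
    r = laplN G f u - laplN G f v }

/-- The test functions for the curvature of the edge `{u, v}`. -/
def IsRicciTest (G : SimpleGraph V) (u v : V) (f : V → ℝ) : Prop :=
  (∀ x y : V, |f x - f y| ≤ (G.dist x y : ℝ)) ∧ f v - f u = 1

theorem Real.sInf_nonneg_iff {S : Set ℝ} (hS : BddBelow S) : 0 ≤ sInf S ↔ ∀ r ∈ S, 0 ≤ r :=
  ⟨fun h _ hr => h.trans (csInf_le hS hr), Real.sInf_nonneg⟩

namespace IsRicciTest

variable {G : SimpleGraph V} {u v x y : V} {f : V → ℝ}

theorem neg (hf : IsRicciTest G u v f) : IsRicciTest G v u (-f) := by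
  refine ⟨fun x y => ?_, ?_⟩
  · rw [← abs_neg]
    simpa [sub_eq_add_neg, add_comm] using hf.1 x y
  · have := hf.2
    simp only [Pi.neg_apply]
    linarith

theorem abs_sub_le_one (hf : IsRicciTest G u v f) (h : G.Adj x y) : |f y - f x| ≤ 1 := by
  have := hf.1 y x
  rwa [dist_eq_one_iff_adj.2 h.symm, Nat.cast_one] at this

theorem graphDist (hconn : G.Connected) (w : V) (h : G.dist w v = G.dist w u + 1) :
    IsRicciTest G u v (fun z => (G.dist w z : ℝ)) := by
  refine ⟨fun x y => ?_, by simp [h]⟩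
  have h₁ : (G.dist w x : ℝ) ≤ G.dist w y + G.dist x y := by
    rw [dist_comm (u := x)]
    exact_mod_cast hconn.dist_triangle
  have h₂ : (G.dist w y : ℝ) ≤ G.dist w x + G.dist x y := by
    exact_mod_cast hconn.dist_triangle
  rw [abs_le]
  constructor <;> linarith

theorem abs_lapl_le [G.LocallyFinite] (hf : IsRicciTest G u v f) (x : V) :
    |lapl G f x| ≤ G.degree x := by
  refine (Finset.abs_sum_le_sum_abs _ _).trans ?_
  refine (Finset.sum_le_card_nsmul _ _ 1 fun y hy => ?_).trans (by simp)
  exact hf.abs_sub_le_one (by simpa using hy)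

end IsRicciTest

section

variable (G : SimpleGraph V) [G.LocallyFinite] {u v : V}

theorem laplN_eq_div (f : V → ℝ) (x : V) : laplN G f x = lapl G f x / G.degree x := by
  rw [laplN, lapl, one_div_mul_eq_div]

theorem lapl_neg (f : V → ℝ) (x : V) : lapl G (-f) x = -lapl G f x := by
  rw [lapl, lapl, ← Finset.sum_neg_distrib]
  exact Finset.sum_congr rfl fun y _ => by simp only [Pi.neg_apply]; ring

theorem lapl_eq_add_sum_erase [DecidableEq V] (f : V → ℝ) (h : G.Adj u v) :
    lapl G f u = (f v - f u) + ∑ y ∈ (G.neighborFinset u).erase v, (f y - f u) :=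
  (Finset.add_sum_erase _ _ (by simpa using h)).symm

theorem ricci_nonneg_iff :
    0 ≤ ricci G u v ↔ ∀ f, IsRicciTest G u v f → lapl G f v ≤ lapl G f u := by
  rw [ricci, Real.sInf_nonneg_iff]
  · constructor
    · exact fun h f hf => sub_nonneg.1 (h _ ⟨f, hf.1, hf.2, rfl⟩)
    · rintro h _ ⟨f, h₁, h₂, rfl⟩
      exact sub_nonneg.2 (h f ⟨h₁, h₂⟩)
  · refine ⟨-(G.degree u) - G.degree v, ?_⟩
    rintro _ ⟨f, h₁, h₂, rfl⟩
    have hf : IsRicciTest G u v f := ⟨h₁, h₂⟩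
    linarith [(abs_le.1 (hf.abs_lapl_le u)).1, (abs_le.1 (hf.abs_lapl_le v)).2]

theorem ricciN_nonneg_iff :
    0 ≤ ricciN G u v ↔ ∀ f, IsRicciTest G u v f →
      lapl G f v / G.degree v ≤ lapl G f u / G.degree u := by
  simp only [ricciN, laplN_eq_div]
  rw [Real.sInf_nonneg_iff]
  · constructor
    · exact fun h f hf => sub_nonneg.1 (h _ ⟨f, hf.1, hf.2, rfl⟩)
    · rintro h _ ⟨f, h₁, h₂, rfl⟩
      exact sub_nonneg.2 (h f ⟨h₁, h₂⟩)
  · refine ⟨-2, ?_⟩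
    rintro _ ⟨f, h₁, h₂, rfl⟩
    have hf : IsRicciTest G u v f := ⟨h₁, h₂⟩
    have key (x : V) : |lapl G f x / G.degree x| ≤ 1 := by
      rw [abs_div, Nat.abs_cast]
      exact div_le_one_of_le₀ (hf.abs_lapl_le x) (Nat.cast_nonneg _)
    linarith [(abs_le.1 (key u)).1, (abs_le.1 (key v)).2]

theorem ricci_nonneg_symm (h : 0 ≤ ricci G u v) : 0 ≤ ricci G v u := by
  rw [ricci_nonneg_iff] at h ⊢
  intro f hf
  have := h _ hf.neg
  rw [lapl_neg, lapl_neg] at this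
  linarith

theorem ricciN_nonneg_symm (h : 0 ≤ ricciN G u v) : 0 ≤ ricciN G v u := by
  rw [ricciN_nonneg_iff] at h ⊢
  intro f hf
  have := h _ hf.neg
  rw [lapl_neg, lapl_neg, neg_div, neg_div] at this
  linarith

variable {G}

theorem IsRicciTest.lapl_le {f : V → ℝ} (hf : IsRicciTest G u v f) (h : G.Adj u v) :
    lapl G f v ≤ G.degree v - 2 := by
  classical
  have hsum := Finset.sum_le_card_nsmul ((G.neighborFinset v).erase u) (fun y => f y - f v) 1
    fun y hy => (abs_le.1 (hf.abs_sub_le_one (by simpa using Finset.mem_of_mem_erase hy))).2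
  rw [lapl_eq_add_sum_erase G f h.symm]
  have hcard := Finset.card_erase_add_one (show u ∈ G.neighborFinset v by simpa using h.symm)
  rw [card_neighborFinset_eq_degree] at hcard
  have hcast : ((((G.neighborFinset v).erase u).card : ℕ) : ℝ) + 1 = G.degree v := by
    exact_mod_cast hcard
  rw [nsmul_one] at hsum
  linarith [hf.2]

theorem ricci_nonneg_iff_ricciN_nonneg_of_degree_eq (h : G.Adj u v)
    (hd : G.degree u = G.degree v) : 0 ≤ ricci G u v ↔ 0 ≤ ricciN G u v := by
  have hpos : (0 : ℝ) < G.degree v := by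
    exact_mod_cast (G.degree_pos_iff_exists_adj v).2 ⟨u, h.symm⟩
  simp only [ricci_nonneg_iff, ricciN_nonneg_iff, hd, div_le_div_iff_of_pos_right hpos]

theorem IsRicciTest.lapl_eq_one {f : V → ℝ} (hf : IsRicciTest G u v f) (h : G.Adj u v)
    (hu : G.degree u = 1) : lapl G f u = 1 := by
  classical
  have hempty : (G.neighborFinset u).erase v = ∅ := by
    rw [← Finset.card_eq_zero, Finset.card_erase_of_mem (by simpa using h),
      card_neighborFinset_eq_degree, hu]
  rw [lapl_eq_add_sum_erase G f h, hempty, Finset.sum_empty, hf.2, add_zero]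

theorem ricci_nonneg_of_degree_eq_one (h : G.Adj u v) (hu : G.degree u = 1)
    (hv : G.degree v ≤ 3) : 0 ≤ ricci G u v := by
  rw [ricci_nonneg_iff]
  intro f hf
  have hv' : (G.degree v : ℝ) ≤ 3 := by exact_mod_cast hv
  linarith [hf.lapl_eq_one h hu, hf.lapl_le h]

theorem ricciN_nonneg_of_degree_eq_one (h : G.Adj u v) (hu : G.degree u = 1) :
    0 ≤ ricciN G u v := by
  rw [ricciN_nonneg_iff]
  intro f hf
  rw [hf.lapl_eq_one h hu, hu, Nat.cast_one, div_one]
  exact div_le_one_of_le₀ (by linarith [hf.lapl_le h]) (Nat.cast_nonneg _)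

/-- On an edge joining a vertex of degree two to one of degree three, either curvature is
nonnegative exactly when the other neighbour of `u` is within distance two of another
neighbour of `v`. -/
theorem ricci_nonneg_iff_ricciN_nonneg_of_degree_two_three (hconn : G.Connected)
    (h : G.Adj u v) (hu : G.degree u = 2) (hv : G.degree v = 3) :
    0 ≤ ricci G u v ↔ 0 ≤ ricciN G u v := by
  classical
  obtain ⟨x, hx⟩ : ∃ x, (G.neighborFinset u).erase v = {x} := by
    rw [← Finset.card_eq_one, Finset.card_erase_of_mem (by simpa using h),
      card_neighborFinset_eq_degree, hu]
  obtain ⟨y, z, hyz, hyz'⟩ : ∃ y z, y ≠ z ∧ (G.neighborFinset v).erase u = {y, z} := by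
    rw [← Finset.card_eq_two, Finset.card_erase_of_mem (by simpa using h.symm),
      card_neighborFinset_eq_degree, hv]
  have hxu : x ≠ v ∧ G.Adj u x := by
    simpa using (hx ▸ Finset.mem_singleton_self x : x ∈ (G.neighborFinset u).erase v)
  have hyv : y ≠ u ∧ G.Adj v y := by
    simpa using (hyz' ▸ by simp : y ∈ (G.neighborFinset v).erase u)
  have hzv : z ≠ u ∧ G.Adj v z := by
    simpa using (hyz' ▸ by simp : z ∈ (G.neighborFinset v).erase u)
  have hlu (f : V → ℝ) : lapl G f u = (f v - f u) + (f x - f u) := by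
    rw [lapl_eq_add_sum_erase G f h, hx, Finset.sum_singleton]
  have hlv (f : V → ℝ) : lapl G f v = (f u - f v) + ((f y - f v) + (f z - f v)) := by
    rw [lapl_eq_add_sum_erase G f h.symm, hyz', Finset.sum_pair hyz]
  rw [ricci_nonneg_iff, ricciN_nonneg_iff]
  simp only [hlu, hlv, hu, hv, Nat.cast_ofNat]
  by_cases hnear : G.dist x y ≤ 2 ∨ G.dist x z ≤ 2
  · have key (f : V → ℝ) (hf : IsRicciTest G u v f) :
        -1 ≤ f x - f u ∧ f y - f v ≤ 1 ∧ f z - f v ≤ 1 ∧ (f y - f x ≤ 2 ∨ f z - f x ≤ 2) := by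
      refine ⟨(abs_le.1 (hf.abs_sub_le_one hxu.2)).1, (abs_le.1 (hf.abs_sub_le_one hyv.2)).2,
        (abs_le.1 (hf.abs_sub_le_one hzv.2)).2, hnear.imp (fun hd => ?_) fun hd => ?_⟩
      all_goals
        refine (le_abs_self _).trans ((hf.1 _ _).trans ?_)
        rw [dist_comm]
        exact_mod_cast hd
    constructor
    all_goals
      intro _ f hf
      have := hf.2
      obtain ⟨h₁, h₂, h₃, h₄ | h₄⟩ := key f hf <;> linarith
  · push Not at hnear
    have hdxu : G.dist x u = 1 := dist_eq_one_iff_adj.2 hxu.2.symm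
    have huv : G.dist u v = 1 := dist_eq_one_iff_adj.2 h
    have hvy : G.dist v y = 1 := dist_eq_one_iff_adj.2 hyv.2
    have hvz : G.dist v z = 1 := dist_eq_one_iff_adj.2 hzv.2
    have t₁ : G.dist x v ≤ G.dist x u + G.dist u v := hconn.dist_triangle
    have t₂ : G.dist x y ≤ G.dist x v + G.dist v y := hconn.dist_triangle
    have t₃ : G.dist x z ≤ G.dist x v + G.dist v z := hconn.dist_triangle
    have hxv : G.dist x v = 2 := by lia
    have hxy : G.dist x y = 3 := by lia
    have hxz : G.dist x z = 3 := by lia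
    have hf : IsRicciTest G u v (fun w => (G.dist x w : ℝ)) :=
      IsRicciTest.graphDist hconn x (by lia)
    constructor
    all_goals
      intro hall
      have := hall _ hf
      simp only [hxv, hxy, hxz, hdxu, dist_self] at this
      norm_num at this

theorem ricci_nonneg_iff_ricciN_nonneg_of_degree_le (hconn : G.Connected) (h : G.Adj u v)
    (huv : G.degree u ≤ G.degree v) (hv : G.degree v ≤ 3) :
    0 ≤ ricci G u v ↔ 0 ≤ ricciN G u v := by
  have hpos : 0 < G.degree u := (G.degree_pos_iff_exists_adj u).2 ⟨v, h⟩
  obtain hd | hd | ⟨hd₂, hd₃⟩ : G.degree u = G.degree v ∨ G.degree u = 1 ∨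
      (G.degree u = 2 ∧ G.degree v = 3) := by lia
  · exact ricci_nonneg_iff_ricciN_nonneg_of_degree_eq h hd
  · exact iff_of_true (ricci_nonneg_of_degree_eq_one h hd hv) (ricciN_nonneg_of_degree_eq_one h hd)
  · exact ricci_nonneg_iff_ricciN_nonneg_of_degree_two_three hconn h hd₂ hd₃

end

/-- For a connected, locally finite simple graph with maximum degree at
most 3 (and at least two vertices), the combinatorial Ricci curvature is nonnegative on
every edge iff the normalized Ricci curvature is nonnegative on every edge. -/
theorem nonneg_ricci_combinatorial_iff_normalized (G : SimpleGraph V) [G.LocallyFinite]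
    [Nontrivial V] (hconn : G.Connected) (hdeg : ∀ v : V, G.degree v ≤ 3) :
    (∀ u v : V, G.Adj u v → 0 ≤ ricci G u v) ↔
      (∀ u v : V, G.Adj u v → 0 ≤ ricciN G u v) := by
  refine forall₃_congr fun u v h => ?_
  obtain huv | hvu := le_total (G.degree u) (G.degree v)
  · exact ricci_nonneg_iff_ricciN_nonneg_of_degree_le hconn h huv (hdeg v)
  · have key := ricci_nonneg_iff_ricciN_nonneg_of_degree_le hconn h.symm hvu (hdeg u)
    exact ⟨fun hC => ricciN_nonneg_symm G (key.1 (ricci_nonneg_symm G hC)),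
      fun hN => ricci_nonneg_symm G (key.2 (ricciN_nonneg_symm G hN))⟩
end

section
/- Let G = (V,E) be a finite, connected, 3-regular simple graph with nonnegative Ricci curvature (κ(u,v) ≥ 0 for every edge {u,v}) and diameter at least 6. Then G is isomorphic to a prism graph Y_n = C_n □ K_2 for some n, or to a Möbius ladder M_{2n} for some n. -/
open SimpleGraph

variable {V : Type*}

/-- The prism graph `Y_n = C_n □ K_2`. -/
def prismGraph (n : ℕ) : SimpleGraph (Fin n × Fin 2) :=
  (cycleGraph n).boxProd (⊤ : SimpleGraph (Fin 2))

/-- The Möbius ladder `M_{2n}`: vertices `ZMod (2n)`, with `i ∼ i+1` and `i ∼ i+n`. -/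
def mobiusLadder (n : ℕ) : SimpleGraph (ZMod (2 * n)) :=
  SimpleGraph.fromRel (fun i j => j = i + 1 ∨ j = i + (n : ZMod (2 * n)))

/-- The neighbours of `v` are exactly the three distinct vertices `a`, `b`, `c`. -/
structure IsNbrTriple (G : SimpleGraph V) (v a b c : V) : Prop where
  ne₁₂ : a ≠ b
  ne₁₃ : a ≠ c
  ne₂₃ : b ≠ c
  adj_iff : ∀ w, G.Adj v w ↔ w = a ∨ w = b ∨ w = c

namespace IsNbrTriple

variable {G : SimpleGraph V} {v a b c : V}

theorem swap (h : IsNbrTriple G v a b c) : IsNbrTriple G v a c b :=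
  ⟨h.ne₁₃, h.ne₁₂, h.ne₂₃.symm, fun w => by rw [h.adj_iff]; tauto⟩

theorem rotate (h : IsNbrTriple G v a b c) : IsNbrTriple G v b c a :=
  ⟨h.ne₂₃, h.ne₁₂.symm, h.ne₁₃.symm, fun w => by rw [h.adj_iff]; tauto⟩

theorem flip (h : IsNbrTriple G v a b c) : IsNbrTriple G v b a c := h.rotate.swap

theorem adj₁ (h : IsNbrTriple G v a b c) : G.Adj v a := (h.adj_iff a).2 (by simp)

theorem adj₂ (h : IsNbrTriple G v a b c) : G.Adj v b := (h.adj_iff b).2 (by simp)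

theorem adj₃ (h : IsNbrTriple G v a b c) : G.Adj v c := (h.adj_iff c).2 (by simp)

theorem facts (h : IsNbrTriple G v a b c) :
    (a ≠ b ∧ a ≠ c ∧ b ≠ c) ∧ (G.Adj v a ∧ G.Adj v b ∧ G.Adj v c) ∧
      ∀ w, G.Adj v w → w = a ∨ w = b ∨ w = c :=
  ⟨⟨h.ne₁₂, h.ne₁₃, h.ne₂₃⟩, ⟨h.adj₁, h.adj₂, h.adj₃⟩, fun w => (h.adj_iff w).1⟩

theorem lapl_eq [G.LocallyFinite] (h : IsNbrTriple G v a b c) (f : V → ℝ) :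
    lapl G f v = (f a - f v) + (f b - f v) + (f c - f v) := by
  classical
  have : G.neighborFinset v = {a, b, c} := by
    ext w
    simp [h.adj_iff]
  rw [lapl, this, Finset.sum_insert (by simp [h.ne₁₂, h.ne₁₃]),
    Finset.sum_insert (by simp [h.ne₂₃]), Finset.sum_singleton, add_assoc]

end IsNbrTriple

theorem two_le_dist {G : SimpleGraph V} (hconn : G.Connected) {x y : V} (hne : x ≠ y)
    (hadj : ¬ G.Adj x y) : 2 ≤ G.dist x y := by
  have h₀ : G.dist x y ≠ 0 := fun h => hne (hconn.dist_eq_zero_iff.1 h)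
  have h₁ : G.dist x y ≠ 1 := fun h => hadj (SimpleGraph.dist_eq_one_iff_adj.1 h)
  omega

theorem three_le_dist {G : SimpleGraph V} (hconn : G.Connected) {x y : V} (hne : x ≠ y)
    (hadj : ¬ G.Adj x y) (hcommon : ¬ ∃ z, G.Adj x z ∧ G.Adj z y) : 3 ≤ G.dist x y := by
  have h₁ := two_le_dist hconn hne hadj
  have h₂ : G.dist x y ≠ 2 := fun h => by
    obtain ⟨p, hp⟩ := hconn.exists_walk_length_eq_dist x y
    rw [h] at hp
    refine hcommon ⟨p.getVert 1, ?_, ?_⟩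
    · simpa using p.adj_getVert_succ (i := 0) (by omega)
    · have := p.adj_getVert_succ (i := 1) (by omega)
      rwa [show 1 + 1 = p.length by omega, p.getVert_length] at this
  omega

section Cubic

variable {G : SimpleGraph V} [G.LocallyFinite]

theorem exists_isNbrTriple (hreg : ∀ v : V, G.degree v = 3) {v a : V} (ha : G.Adj v a) :
    ∃ b c, IsNbrTriple G v a b c := by
  classical
  obtain ⟨x, y, z, hxy, hxz, hyz, h⟩ := Finset.card_eq_three.1 (hreg v)
  have hn : ∀ w, G.Adj v w ↔ w = x ∨ w = y ∨ w = z := fun w => by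
    rw [← SimpleGraph.mem_neighborFinset, h]; simp
  have ht : IsNbrTriple G v x y z := ⟨hxy, hxz, hyz, hn⟩
  rcases (hn a).1 ha with rfl | rfl | rfl
  · exact ⟨_, _, ht⟩
  · exact ⟨_, _, ht.rotate⟩
  · exact ⟨_, _, ht.rotate.rotate⟩

theorem exists_isNbrTriple_of_ne (hreg : ∀ v : V, G.degree v = 3) {v a b : V} (ha : G.Adj v a)
    (hb : G.Adj v b) (hab : a ≠ b) : ∃ c, IsNbrTriple G v a b c := by
  obtain ⟨x, y, h⟩ := exists_isNbrTriple hreg ha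
  rcases (h.adj_iff b).1 hb with rfl | rfl | rfl
  · exact absurd rfl hab
  · exact ⟨_, h⟩
  · exact ⟨_, h.swap⟩

theorem isNbrTriple_of_adj (hreg : ∀ v : V, G.degree v = 3) {v a b c : V} (ha : G.Adj v a)
    (hb : G.Adj v b) (hc : G.Adj v c) (hab : a ≠ b) (hac : a ≠ c) (hbc : b ≠ c) :
    IsNbrTriple G v a b c := by
  obtain ⟨x, h⟩ := exists_isNbrTriple_of_ne hreg ha hb hab
  rcases (h.adj_iff c).1 hc with rfl | rfl | rfl
  · exact absurd rfl hac
  · exact absurd rfl hbc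
  · exact h

theorem bddBelow_lapl_sub (hreg : ∀ v : V, G.degree v = 3) (u v : V) :
    BddBelow { r : ℝ | ∃ f : V → ℝ, (∀ x y : V, |f x - f y| ≤ (G.dist x y : ℝ)) ∧
      f v - f u = 1 ∧ r = lapl G f u - lapl G f v } := by
  have bound : ∀ (f : V → ℝ), (∀ x y : V, |f x - f y| ≤ (G.dist x y : ℝ)) → ∀ x,
      |lapl G f x| ≤ 3 := by
    intro f hf x
    calc |lapl G f x| ≤ ∑ y ∈ G.neighborFinset x, |f y - f x| := Finset.abs_sum_le_sum_abs _ _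
      _ ≤ ∑ y ∈ G.neighborFinset x, (1 : ℝ) := by
        refine Finset.sum_le_sum fun y hy => (hf y x).trans ?_
        have : G.dist y x = 1 :=
          SimpleGraph.dist_eq_one_iff_adj.2 ((SimpleGraph.mem_neighborFinset _ _ _).1 hy).symm
        simp [this]
      _ = 3 := by simp [hreg x]
  refine ⟨-6, ?_⟩
  rintro r ⟨f, hf, -, rfl⟩
  have h₁ := abs_le.1 (bound f hf u)
  have h₂ := abs_le.1 (bound f hf v)
  linarith

/-- An edge that lies in no triangle or square has no neighbour at distance three from both
neighbours across the edge. -/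
theorem exists_common_nbr_of_nonnegRicci (hconn : G.Connected) (hreg : ∀ v : V, G.degree v = 3)
    (hric : NonnegRicci G) {u v a b c d : V} (hu : IsNbrTriple G u v a b)
    (hv : IsNbrTriple G v u c d) :
    (a = c ∨ a = d ∨ b = c ∨ b = d) ∨ (G.Adj a c ∨ G.Adj a d ∨ G.Adj b c ∨ G.Adj b d) ∨
      (∃ z, G.Adj a z ∧ G.Adj z c) ∨ (∃ z, G.Adj a z ∧ G.Adj z d) := by
  by_contra hcon
  simp only [not_or] at hcon
  obtain ⟨⟨ac, ad, bc, bd⟩, ⟨nac, nad, nbc, nbd⟩, cac, cad⟩ := hcon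
  have hac := three_le_dist hconn ac nac cac
  have had := three_le_dist hconn ad nad cad
  have hbc := two_le_dist hconn bc nbc
  have hbd := two_le_dist hconn bd nbd
  have hua : G.dist u a = 1 := SimpleGraph.dist_eq_one_iff_adj.2 hu.adj₂
  have hub : G.dist u b = 1 := SimpleGraph.dist_eq_one_iff_adj.2 hu.adj₃
  have huv : G.dist u v = 1 := SimpleGraph.dist_eq_one_iff_adj.2 hu.adj₁
  have hva : 2 ≤ G.dist v a := by
    have : G.dist a c ≤ G.dist a v + G.dist v c := hconn.dist_triangle
    have h1 : G.dist v c = 1 := SimpleGraph.dist_eq_one_iff_adj.2 hv.adj₂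
    rw [G.dist_comm (u := a) (v := v)] at this
    omega
  have hva' : G.dist v a ≤ G.dist v u + G.dist u a := hconn.dist_triangle
  have hvb : 1 ≤ G.dist v b := by
    have : G.dist b c ≤ G.dist b v + G.dist v c := hconn.dist_triangle
    have h1 : G.dist v c = 1 := SimpleGraph.dist_eq_one_iff_adj.2 hv.adj₂
    rw [G.dist_comm (u := b) (v := v)] at this
    omega
  rw [G.dist_comm] at hac had hbc hbd
  rw [G.dist_comm (u := v) (v := u)] at hva'
  let f : V → ℝ := fun x => min ((G.dist x a : ℝ) - 1) (G.dist x b : ℝ)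
  have hdist : ∀ x y z, (G.dist x z : ℝ) ≤ G.dist x y + G.dist y z := fun x y z => by
    exact_mod_cast hconn.dist_triangle
  have hf : ∀ x y, |f x - f y| ≤ (G.dist x y : ℝ) := by
    have key : ∀ x y, f x ≤ G.dist x y + f y := fun x y => by
      have h₁ := hdist x y a
      have h₂ := hdist x y b
      simp only [f, ← min_add_add_left]
      exact min_le_min (by linarith) h₂
    intro x y
    rw [abs_le]
    have h₁ := key x y
    have h₂ := key y x
    rw [G.dist_comm] at h₂
    constructor <;> linarith
  have fu : f u = 0 := by simp [f, hua, hub]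
  have fv : f v = 1 := by
    have : G.dist v a = 2 := by omega
    simp only [f, this]
    rw [min_eq_left]
    · norm_num
    · have : (1 : ℝ) ≤ G.dist v b := by exact_mod_cast hvb
      push_cast
      linarith
  have fa : f a ≤ -1 := (min_le_left _ _).trans (by simp)
  have fb : f b ≤ 0 := (min_le_right _ _).trans (by simp)
  have fge : ∀ w, 3 ≤ G.dist w a → 2 ≤ G.dist w b → 2 ≤ f w := fun w h₁ h₂ => by
    have h₁ : (3 : ℝ) ≤ G.dist w a := by exact_mod_cast h₁
    have h₂ : (2 : ℝ) ≤ G.dist w b := by exact_mod_cast h₂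
    exact le_min (by linarith) h₂
  have fc := fge c hac hbc
  have fd := fge d had hbd
  have hle : ricci G u v ≤ lapl G f u - lapl G f v :=
    csInf_le (bddBelow_lapl_sub hreg u v) ⟨f, hf, by rw [fu, fv]; norm_num, rfl⟩
  have hnn := hric u v hu.adj₁
  rw [hu.lapl_eq, hv.lapl_eq, fu, fv] at hle
  linarith

/-- In a cubic graph of nonnegative curvature every edge lies in a triangle, in a square, or in two
pentagons that match the remaining neighbours of its endpoints. -/
def ShortCycleCondition (G : SimpleGraph V) : Prop :=
  ∀ u v a b c d : V, IsNbrTriple G u v a b → IsNbrTriple G v u c d →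
    (a = c ∨ a = d ∨ b = c ∨ b = d) ∨ (G.Adj a c ∨ G.Adj a d ∨ G.Adj b c ∨ G.Adj b d) ∨
      ((∃ z, G.Adj a z ∧ G.Adj z c) ∧ (∃ z, G.Adj b z ∧ G.Adj z d)) ∨
      ((∃ z, G.Adj a z ∧ G.Adj z d) ∧ (∃ z, G.Adj b z ∧ G.Adj z c))

theorem shortCycleCondition_of_nonnegRicci (hconn : G.Connected)
    (hreg : ∀ v : V, G.degree v = 3) (hric : NonnegRicci G) : ShortCycleCondition G := by
  intro u v a b c d hu hv
  have symm : ∀ x y, (∃ z, G.Adj x z ∧ G.Adj z y) ↔ ∃ z, G.Adj y z ∧ G.Adj z x := fun x y =>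
    ⟨fun ⟨z, h₁, h₂⟩ => ⟨z, h₂.symm, h₁.symm⟩, fun ⟨z, h₁, h₂⟩ => ⟨z, h₂.symm, h₁.symm⟩⟩
  have ha := exists_common_nbr_of_nonnegRicci hconn hreg hric hu hv
  have hb := exists_common_nbr_of_nonnegRicci hconn hreg hric hu.swap hv
  have hc := exists_common_nbr_of_nonnegRicci hconn hreg hric hv hu
  have hd := exists_common_nbr_of_nonnegRicci hconn hreg hric hv.swap hu
  rw [symm c a, symm c b, G.adj_comm c a, G.adj_comm c b, G.adj_comm d a, G.adj_comm d b,
    eq_comm (a := c), eq_comm (a := c), eq_comm (a := d), eq_comm (a := d)] at hc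
  rw [symm d a, symm d b, G.adj_comm c a, G.adj_comm c b, G.adj_comm d a, G.adj_comm d b,
    eq_comm (a := c), eq_comm (a := c), eq_comm (a := d), eq_comm (a := d)] at hd
  generalize (∃ z, G.Adj a z ∧ G.Adj z c) = ac at *
  generalize (∃ z, G.Adj a z ∧ G.Adj z d) = ad at *
  generalize (∃ z, G.Adj b z ∧ G.Adj z c) = bc at *
  generalize (∃ z, G.Adj b z ∧ G.Adj z d) = bd at *
  grind

end Cubic

/-- `x 0, …, x k` and `y 0, …, y k` are the two sides of an embedded ladder with `k` squares. -/
structure IsLadder (G : SimpleGraph V) (k : ℕ) (x y : ℕ → V) : Prop where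
  adj_x : ∀ i < k, G.Adj (x i) (x (i + 1))
  adj_y : ∀ i < k, G.Adj (y i) (y (i + 1))
  rung : ∀ i ≤ k, G.Adj (x i) (y i)
  inj_x : ∀ i ≤ k, ∀ j ≤ k, x i = x j → i = j
  inj_y : ∀ i ≤ k, ∀ j ≤ k, y i = y j → i = j
  ne : ∀ i ≤ k, ∀ j ≤ k, x i ≠ y j

theorem exists_isLadder_of_five_rungs {G : SimpleGraph V} {a₀ a₁ a₂ a₃ a₄ b₀ b₁ b₂ b₃ b₄ : V}
    (hnd : [a₀, a₁, a₂, a₃, a₄, b₀, b₁, b₂, b₃, b₄].Nodup)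
    (ha : G.Adj a₀ a₁ ∧ G.Adj a₁ a₂ ∧ G.Adj a₂ a₃ ∧ G.Adj a₃ a₄)
    (hb : G.Adj b₀ b₁ ∧ G.Adj b₁ b₂ ∧ G.Adj b₂ b₃ ∧ G.Adj b₃ b₄)
    (hab : G.Adj a₀ b₀ ∧ G.Adj a₁ b₁ ∧ G.Adj a₂ b₂ ∧ G.Adj a₃ b₃ ∧ G.Adj a₄ b₄) :
    ∃ x y, IsLadder G 4 x y := by
  let L := [a₀, a₁, a₂, a₃, a₄, b₀, b₁, b₂, b₃, b₄]
  have inj : ∀ i < 10, ∀ j < 10, L.getD i a₀ = L.getD j a₀ → i = j := fun i hi j hj h => by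
    rw [List.getD_eq_getElem _ _ (by simpa [L]), List.getD_eq_getElem _ _ (by simpa [L])] at h
    exact (hnd.getElem_inj_iff).1 h
  refine ⟨fun i => L.getD i a₀, fun i => L.getD (5 + i) a₀, ?_, ?_, ?_, ?_, ?_, ?_⟩
  · intro i hi
    interval_cases i <;> simp [L, ha]
  · intro i hi
    interval_cases i <;> simp [L, hb]
  · intro i hi
    interval_cases i <;> simp [L, hab]
  · intro i hi j hj h
    exact inj i (by omega) j (by omega) h
  · intro i hi j hj h
    have := inj (5 + i) (by omega) (5 + j) (by omega) h
    omega
  · intro i hi j hj h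
    have := inj i (by omega) (5 + j) (by omega) h
    omega

/-- A path `x₀, …, x₆` in a cubic graph along which the `1`-Lipschitz function `f` increases by one
in every step, where `yᵢ` is the neighbour of `xᵢ` off the path. -/
structure IsLevelPath (G : SimpleGraph V) (f : V → ℤ)
    (x₀ x₁ x₂ x₃ x₄ x₅ x₆ y₁ y₂ y₃ y₄ y₅ : V) : Prop where
  lip : ∀ u v, G.Adj u v → f u ≤ f v + 1
  f₀ : f x₀ = 0
  f₁ : f x₁ = 1
  f₂ : f x₂ = 2
  f₃ : f x₃ = 3
  f₄ : f x₄ = 4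
  f₅ : f x₅ = 5
  f₆ : f x₆ = 6
  n₁ : IsNbrTriple G x₁ x₀ x₂ y₁
  n₂ : IsNbrTriple G x₂ x₁ x₃ y₂
  n₃ : IsNbrTriple G x₃ x₂ x₄ y₃
  n₄ : IsNbrTriple G x₄ x₃ x₅ y₄
  n₅ : IsNbrTriple G x₅ x₄ x₆ y₅

namespace IsLevelPath

variable {G : SimpleGraph V} {f : V → ℤ}
  {x₀ x₁ x₂ x₃ x₄ x₅ x₆ y₁ y₂ y₃ y₄ y₅ : V}

theorem reverse (h : IsLevelPath G f x₀ x₁ x₂ x₃ x₄ x₅ x₆ y₁ y₂ y₃ y₄ y₅) :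
    IsLevelPath G (fun v => 6 - f v) x₆ x₅ x₄ x₃ x₂ x₁ x₀ y₅ y₄ y₃ y₂ y₁ where
  lip u v huv := by have := h.lip v u huv.symm; omega
  f₀ := by simp [h.f₆]
  f₁ := by simp [h.f₅]
  f₂ := by simp [h.f₄]
  f₃ := by simp [h.f₃]
  f₄ := by simp [h.f₂]
  f₅ := by simp [h.f₁]
  f₆ := by simp [h.f₀]
  n₁ := h.n₅.flip
  n₂ := h.n₄.flip
  n₃ := h.n₃.flip
  n₄ := h.n₂.flip
  n₅ := h.n₁.flip

theorem adj_facts (h : IsLevelPath G f x₀ x₁ x₂ x₃ x₄ x₅ x₆ y₁ y₂ y₃ y₄ y₅) (u v : V)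
    (huv : G.Adj u v) : G.Adj v u ∧ u ≠ v ∧ f u ≤ f v + 1 ∧ f v ≤ f u + 1 :=
  ⟨huv.symm, huv.ne, h.lip u v huv, h.lip v u huv.symm⟩

variable [G.LocallyFinite]

theorem y₂_ne_y₃ (hreg : ∀ v : V, G.degree v = 3) (hG : ShortCycleCondition G)
    (h : IsLevelPath G f x₀ x₁ x₂ x₃ x₄ x₅ x₆ y₁ y₂ y₃ y₄ y₅) : y₂ ≠ y₃ := by
  have hadj := h.adj_facts
  obtain ⟨-, f₀, f₁, f₂, f₃, f₄, f₅, f₆, n₁, n₂, n₃, n₄, n₅⟩ := h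
  rintro rfl
  obtain ⟨w, hw⟩ := exists_isNbrTriple_of_ne hreg n₂.adj₃.symm n₃.adj₃.symm (by grind)
  have c₁ := hG _ _ _ _ _ _ n₁.rotate n₂
  have c₂ := hG _ _ _ _ _ _ n₃.rotate n₄
  replace n₁ := n₁.facts
  replace n₂ := n₂.facts
  replace n₃ := n₃.facts
  replace n₄ := n₄.facts
  replace hw := hw.facts
  clear hreg hG n₅
  have h₁ : G.Adj w x₀ ∨ w = y₁ := by clear c₂; grind (splits := 30)
  have h₂ : G.Adj w x₅ ∨ w = y₄ := by clear c₁; grind (splits := 30)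
  grind

theorem edge_x₂_x₃_cases (hreg : ∀ v : V, G.degree v = 3) (hG : ShortCycleCondition G)
    (h : IsLevelPath G f x₀ x₁ x₂ x₃ x₄ x₅ x₆ y₁ y₂ y₃ y₄ y₅) :
    G.Adj y₂ y₃ ∨ y₁ = y₃ ∨ y₂ = y₄ ∨ (G.Adj y₁ y₃ ∧ G.Adj y₂ y₄) := by
  have hne := h.y₂_ne_y₃ hreg hG
  have hadj := h.adj_facts
  obtain ⟨-, f₀, f₁, f₂, f₃, f₄, f₅, f₆, n₁, n₂, n₃, n₄, n₅⟩ := h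
  have c := hG _ _ _ _ _ _ n₂.rotate n₃
  replace n₁ := n₁.facts
  replace n₂ := n₂.facts
  replace n₃ := n₃.facts
  replace n₄ := n₄.facts
  clear hreg hG n₅
  grind (splits := 30)

/-- The path crosses a rung between `x₂` and `x₄`. -/
theorem exists_isLadder_of_y₂_eq_y₄ (hreg : ∀ v : V, G.degree v = 3) (hG : ShortCycleCondition G)
    (h : IsLevelPath G f x₀ x₁ x₂ x₃ x₄ x₅ x₆ y₁ y₂ y₃ y₄ y₅) (he : y₂ = y₄) :
    ∃ x y, IsLadder G 4 x y := by
  have hadj := h.adj_facts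
  obtain ⟨-, f₀, f₁, f₂, f₃, f₄, f₅, f₆, n₁, n₂, n₃, n₄, n₅⟩ := h
  subst he
  obtain ⟨w, hw⟩ := exists_isNbrTriple_of_ne hreg n₂.adj₃.symm n₄.adj₃.symm (by grind)
  obtain ⟨p, q, n₀⟩ := exists_isNbrTriple hreg n₁.adj₁.symm
  have c₀ := hG _ _ _ _ _ _ n₀ n₁
  have c₁ := hG _ _ _ _ _ _ n₁.rotate n₂
  have c₄ := hG _ _ _ _ _ _ n₄.flip n₅
  replace n₀ := n₀.facts
  replace n₁ := n₁.facts
  replace n₂ := n₂.facts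
  replace n₃ := n₃.facts
  replace n₄ := n₄.facts
  replace n₅ := n₅.facts
  replace hw := hw.facts
  clear hreg hG
  have f_t : f y₂ = 3 := by grind
  have h₁ : y₁ = y₃ ∨ y₁ = w := by clear c₀ c₄; grind (splits := 30)
  have h₄ : y₅ = y₃ ∨ y₅ = w := by clear c₀ c₁; grind (splits := 30)
  clear c₁ c₄
  have f_y₁ : f y₁ = 2 := by grind
  have h₀ : G.Adj p y₁ ∨ G.Adj q y₁ := by grind (splits := 30)
  clear c₀
  obtain ⟨r, hr₀, hr₁, hrx⟩ : ∃ r, G.Adj x₀ r ∧ G.Adj r y₁ ∧ r ≠ x₁ := by grind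
  rcases h₁ with rfl | rfl
  · refine exists_isLadder_of_five_rungs (a₀ := r) (a₁ := y₁) (a₂ := x₃) (a₃ := x₄) (a₄ := x₅)
      (b₀ := x₀) (b₁ := x₁) (b₂ := x₂) (b₃ := y₂) (b₄ := y₅) ?_ ?_ ?_ ?_
    · simp only [List.nodup_cons, List.mem_cons, not_or]
      grind (splits := 30)
    all_goals grind
  · refine exists_isLadder_of_five_rungs (a₀ := r) (a₁ := y₁) (a₂ := y₂) (a₃ := x₄) (a₄ := x₅)
      (b₀ := x₀) (b₁ := x₁) (b₂ := x₂) (b₃ := x₃) (b₄ := y₅) ?_ ?_ ?_ ?_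
    · simp only [List.nodup_cons, List.mem_cons, not_or]
      grind (splits := 30)
    all_goals grind

/-- A square followed by a pair of pentagons cannot occur along the path. -/
theorem not_square_pentagon (hreg : ∀ v : V, G.degree v = 3) (hG : ShortCycleCondition G)
    (h : IsLevelPath G f x₀ x₁ x₂ x₃ x₄ x₅ x₆ y₁ y₂ y₃ y₄ y₅) (h₂₃ : G.Adj y₂ y₃)
    (h₂₄ : G.Adj y₂ y₄) (h₃₅ : G.Adj y₃ y₅) : False := by
  have hne := h.reverse.y₂_ne_y₃ hreg hG
  have hadj := h.adj_facts
  obtain ⟨-, f₀, f₁, f₂, f₃, f₄, f₅, f₆, n₁, n₂, n₃, n₄, n₅⟩ := h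
  have c := hG _ _ _ _ _ _ n₁.rotate n₂
  have m₂ := isNbrTriple_of_adj hreg n₂.adj₃.symm h₂₃ h₂₄ (by grind [n₃.facts])
    (by grind [n₄.facts]) hne.symm
  have m₃ := isNbrTriple_of_adj hreg n₃.adj₃.symm h₂₃.symm h₃₅ (by grind [n₂.facts])
    (by grind [n₅.facts]) (by grind [n₂.facts, n₅.facts])
  replace n₁ := n₁.facts
  replace n₂ := n₂.facts
  replace n₃ := n₃.facts
  replace n₄ := n₄.facts
  replace n₅ := n₅.facts
  replace m₂ := m₂.facts
  replace m₃ := m₃.facts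
  clear hreg hG
  grind (splits := 30)

/-- If both middle edges of the path lie in pairs of pentagons, then the pentagons at the edge
`x₁x₂` are of one of two kinds. -/
theorem pentagon_end_cases (hreg : ∀ v : V, G.degree v = 3) (hG : ShortCycleCondition G)
    (h : IsLevelPath G f x₀ x₁ x₂ x₃ x₄ x₅ x₆ y₁ y₂ y₃ y₄ y₅) (h₁₃ : G.Adj y₁ y₃)
    (h₂₄ : G.Adj y₂ y₄) (h₃₅ : G.Adj y₃ y₅) :
    G.Adj y₁ y₂ ∨ ∃ c, IsNbrTriple G y₂ x₂ y₄ c ∧ G.Adj x₀ c := by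
  have hne := h.reverse.y₂_ne_y₃ hreg hG
  have hadj := h.adj_facts
  obtain ⟨-, f₀, f₁, f₂, f₃, f₄, f₅, f₆, n₁, n₂, n₃, n₄, n₅⟩ := h
  have c := hG _ _ _ _ _ _ n₁.rotate n₂
  obtain ⟨z, m₂⟩ := exists_isNbrTriple_of_ne hreg n₂.adj₃.symm h₂₄ (by grind [n₄.facts])
  have m₃ := isNbrTriple_of_adj hreg n₃.adj₃.symm h₁₃.symm h₃₅ (by grind [n₁.facts])
    (by grind [n₅.facts]) (by grind [n₁.facts, n₅.facts])
  refine or_iff_not_imp_left.2 fun h₁₂ => ⟨z, m₂, ?_⟩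
  replace n₁ := n₁.facts
  replace n₂ := n₂.facts
  replace n₃ := n₃.facts
  replace n₄ := n₄.facts
  replace n₅ := n₅.facts
  replace m₂ := m₂.facts
  replace m₃ := m₃.facts
  clear hreg hG
  grind (splits := 30)

theorem not_pentagon_square_square (hreg : ∀ v : V, G.degree v = 3) (hG : ShortCycleCondition G)
    (h : IsLevelPath G f x₀ x₁ x₂ x₃ x₄ x₅ x₆ y₁ y₂ y₃ y₄ y₅) (h₁₃ : G.Adj y₁ y₃)
    (h₂₄ : G.Adj y₂ y₄) (h₁₂ : G.Adj y₁ y₂) : False := by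
  have hne := h.y₂_ne_y₃ hreg hG
  have hadj := h.adj_facts
  obtain ⟨-, f₀, f₁, f₂, f₃, f₄, f₅, f₆, n₁, n₂, n₃, n₄, n₅⟩ := h
  obtain ⟨p, q, n₀⟩ := exists_isNbrTriple hreg n₁.adj₁.symm
  have c := hG _ _ _ _ _ _ n₀ n₁
  have m₁ := isNbrTriple_of_adj hreg n₁.adj₃.symm h₁₂ h₁₃ (by grind [n₂.facts])
    (by grind [n₃.facts]) hne
  have m₂ := isNbrTriple_of_adj hreg n₂.adj₃.symm h₁₂.symm h₂₄ (by grind [n₁.facts])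
    (by grind [n₄.facts]) (by grind [n₁.facts, n₄.facts])
  replace n₀ := n₀.facts
  replace n₁ := n₁.facts
  replace n₂ := n₂.facts
  replace n₃ := n₃.facts
  replace n₄ := n₄.facts
  replace m₁ := m₁.facts
  replace m₂ := m₂.facts
  clear hreg hG
  grind (splits := 30)

theorem not_pentagon_pentagon (hreg : ∀ v : V, G.degree v = 3) (hG : ShortCycleCondition G)
    (h : IsLevelPath G f x₀ x₁ x₂ x₃ x₄ x₅ x₆ y₁ y₂ y₃ y₄ y₅) (h₁₃ : G.Adj y₁ y₃)
    (h₂₄ : G.Adj y₂ y₄) (h₃₅ : G.Adj y₃ y₅) : False := by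
  have h₁₂ := fun e => h.not_pentagon_square_square hreg hG h₁₃ h₂₄ e
  have h₅₄ := fun e => h.reverse.not_pentagon_square_square hreg hG h₃₅.symm h₂₄.symm e
  obtain ⟨c, hc, hc₀⟩ := (h.pentagon_end_cases hreg hG h₁₃ h₂₄ h₃₅).resolve_left h₁₂
  obtain ⟨e, he, he₆⟩ :=
    (h.reverse.pentagon_end_cases hreg hG h₃₅.symm h₂₄.symm h₁₃.symm).resolve_left h₅₄
  have := h.lip _ _ hc₀.symm
  have := h.lip _ _ hc.adj₃
  have := h.lip _ _ h₂₄.symm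
  have := h.lip _ _ he.adj₃.symm
  have := h.lip _ _ he₆
  have := h.f₀
  have := h.f₆
  omega

theorem adj_of_square_square (hreg : ∀ v : V, G.degree v = 3) (hG : ShortCycleCondition G)
    (h : IsLevelPath G f x₀ x₁ x₂ x₃ x₄ x₅ x₆ y₁ y₂ y₃ y₄ y₅) (h₂₃ : G.Adj y₂ y₃)
    (h₃₄ : G.Adj y₃ y₄) : G.Adj y₂ x₀ ∨ G.Adj y₂ y₁ := by
  have hadj := h.adj_facts
  obtain ⟨-, f₀, f₁, f₂, f₃, f₄, f₅, f₆, n₁, n₂, n₃, n₄, n₅⟩ := h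
  obtain ⟨p, q, n₀⟩ := exists_isNbrTriple hreg n₁.adj₁.symm
  have c₀ := hG _ _ _ _ _ _ n₀ n₁
  have c₁ := hG _ _ _ _ _ _ n₁.rotate n₂
  obtain ⟨z, m₂⟩ := exists_isNbrTriple_of_ne hreg n₂.adj₃.symm h₂₃ (by grind [n₃.facts])
  obtain ⟨z', m₃⟩ := exists_isNbrTriple_of_ne hreg n₃.adj₃.symm h₃₄ (by grind [n₄.facts])
  replace n₀ := n₀.facts
  replace n₁ := n₁.facts
  replace n₂ := n₂.facts
  replace n₃ := n₃.facts
  replace n₄ := n₄.facts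
  replace m₂ := m₂.facts
  replace m₃ := m₃.facts
  clear hreg hG
  by_cases he : y₁ = y₂
  · clear c₁
    grind (splits := 30)
  · clear c₀
    grind (splits := 30)

theorem exists_isLadder_of_square_square (hreg : ∀ v : V, G.degree v = 3)
    (hG : ShortCycleCondition G)
    (h : IsLevelPath G f x₀ x₁ x₂ x₃ x₄ x₅ x₆ y₁ y₂ y₃ y₄ y₅) (h₂₃ : G.Adj y₂ y₃)
    (h₃₄ : G.Adj y₃ y₄) (hne : y₂ ≠ y₄) : ∃ x y, IsLadder G 4 x y := by
  have hl := h.adj_of_square_square hreg hG h₂₃ h₃₄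
  have hr := h.reverse.adj_of_square_square hreg hG h₃₄.symm h₂₃.symm
  have hadj := h.adj_facts
  obtain ⟨-, f₀, f₁, f₂, f₃, f₄, f₅, f₆, n₁, n₂, n₃, n₄, n₅⟩ := h
  have m₃ := isNbrTriple_of_adj hreg n₃.adj₃.symm h₂₃.symm h₃₄ (by grind [n₂.facts])
    (by grind [n₄.facts]) hne
  replace m₃ := m₃.facts
  replace n₁ := n₁.facts
  replace n₂ := n₂.facts
  replace n₃ := n₃.facts
  replace n₄ := n₄.facts
  replace n₅ := n₅.facts
  clear hreg hG
  obtain ⟨l, hl₁, hl₂, hlx, hly⟩ : ∃ l, G.Adj x₁ l ∧ G.Adj l y₂ ∧ l ≠ x₂ ∧ f l ≤ 2 := by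
    rcases hl with hl | hl
    · exact ⟨x₀, by grind⟩
    · exact ⟨y₁, by grind⟩
  obtain ⟨r, hr₅, hr₄, hrx, hry⟩ : ∃ r, G.Adj x₅ r ∧ G.Adj r y₄ ∧ r ≠ x₄ ∧ 4 ≤ f r := by
    rcases hr with hr | hr
    · exact ⟨x₆, by grind⟩
    · exact ⟨y₅, by grind⟩
  clear hl hr
  refine exists_isLadder_of_five_rungs (a₀ := x₁) (a₁ := x₂) (a₂ := x₃) (a₃ := x₄) (a₄ := x₅)
    (b₀ := l) (b₁ := y₂) (b₂ := y₃) (b₃ := y₄) (b₄ := r) ?_ ?_ ?_ ?_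
  · simp only [List.nodup_cons, List.mem_cons, not_or]
    grind (splits := 30)
  all_goals grind

theorem exists_isLadder_of_y₃_eq_y₅ (hreg : ∀ v : V, G.degree v = 3)
    (hG : ShortCycleCondition G)
    (h : IsLevelPath G f x₀ x₁ x₂ x₃ x₄ x₅ x₆ y₁ y₂ y₃ y₄ y₅) (h₂₃ : G.Adj y₂ y₃)
    (he : y₃ = y₅) : ∃ x y, IsLadder G 4 x y := by
  have hadj := h.adj_facts
  obtain ⟨-, f₀, f₁, f₂, f₃, f₄, f₅, f₆, n₁, n₂, n₃, n₄, n₅⟩ := h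
  subst he
  obtain ⟨p, q, n₀⟩ := exists_isNbrTriple hreg n₁.adj₁.symm
  have c₀ := hG _ _ _ _ _ _ n₀ n₁
  have c₁ := hG _ _ _ _ _ _ n₁.rotate n₂
  have m₃ := isNbrTriple_of_adj hreg n₃.adj₃.symm n₅.adj₃.symm h₂₃.symm (by grind)
    (by grind [n₂.facts]) (by grind [n₂.facts])
  obtain ⟨z, m₂⟩ := exists_isNbrTriple_of_ne hreg n₂.adj₃.symm h₂₃ (by grind [n₃.facts])
  replace n₀ := n₀.facts
  replace n₁ := n₁.facts
  replace n₂ := n₂.facts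
  replace n₃ := n₃.facts
  replace n₄ := n₄.facts
  replace n₅ := n₅.facts
  replace m₂ := m₂.facts
  replace m₃ := m₃.facts
  clear hreg hG
  have f_y₃ : f y₃ = 4 := by grind
  have f_y₂ : f y₂ = 3 := by grind
  have h₁ : y₁ = z := by clear c₀; grind (splits := 30)
  clear c₁
  have f_y₁ : f y₁ = 2 := by grind
  have h₀ : G.Adj p y₁ ∨ G.Adj q y₁ := by grind (splits := 30)
  clear c₀
  obtain ⟨r, hr₀, hr₁, hrx⟩ : ∃ r, G.Adj x₀ r ∧ G.Adj r y₁ ∧ r ≠ x₁ := by grind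
  refine exists_isLadder_of_five_rungs (a₀ := x₀) (a₁ := x₁) (a₂ := x₂) (a₃ := x₃) (a₄ := x₄)
    (b₀ := r) (b₁ := y₁) (b₂ := y₂) (b₃ := y₃) (b₄ := x₅) ?_ ?_ ?_ ?_
  · simp only [List.nodup_cons, List.mem_cons, not_or]
    grind (splits := 30)
  all_goals grind

theorem exists_isLadder (hreg : ∀ v : V, G.degree v = 3) (hG : ShortCycleCondition G)
    (h : IsLevelPath G f x₀ x₁ x₂ x₃ x₄ x₅ x₆ y₁ y₂ y₃ y₄ y₅) : ∃ x y, IsLadder G 4 x y := by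
  by_cases h₂₄ : y₂ = y₄
  · exact h.exists_isLadder_of_y₂_eq_y₄ hreg hG h₂₄
  have hadj := h.adj_facts
  have n₁ := h.n₁.facts
  have n₅ := h.n₅.facts
  have f₁ := h.f₁
  have f₅ := h.f₅
  rcases h.edge_x₂_x₃_cases hreg hG with a | a | a | ⟨a, a'⟩ <;>
    rcases h.reverse.edge_x₂_x₃_cases hreg hG with b | b | b | ⟨b, b'⟩
  · exact h.exists_isLadder_of_square_square hreg hG a b.symm h₂₄
  · exact h.exists_isLadder_of_y₃_eq_y₅ hreg hG a b.symm
  · exact absurd b.symm h₂₄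
  · exact (h.not_square_pentagon hreg hG a b'.symm b.symm).elim
  · exact h.reverse.exists_isLadder_of_y₃_eq_y₅ hreg hG b a.symm
  · grind
  · exact absurd b.symm h₂₄
  · grind
  · exact absurd a h₂₄
  · exact absurd a h₂₄
  · exact absurd a h₂₄
  · exact absurd a h₂₄
  · exact (h.reverse.not_square_pentagon hreg hG b a'.symm a.symm).elim
  · grind
  · exact absurd b.symm h₂₄
  · exact (h.not_pentagon_pentagon hreg hG a a' b.symm).elim

end IsLevelPath

section LadderEnd

variable {G : SimpleGraph V} [G.LocallyFinite] {a₁ a₂ a₃ a₄ a₅ b₁ b₂ b₃ b₄ b₅ p q : V}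

/-- The two vertices beyond the last rung `a₅b₅` of a ladder coincide or are adjacent. -/
theorem eq_or_adj_of_ladder_end (hreg : ∀ v : V, G.degree v = 3) (hG : ShortCycleCondition G)
    (ha₂ : IsNbrTriple G a₂ a₁ a₃ b₂) (ha₃ : IsNbrTriple G a₃ a₂ a₄ b₃)
    (ha₄ : IsNbrTriple G a₄ a₃ a₅ b₄) (ha₅ : IsNbrTriple G a₅ a₄ b₅ p)
    (hb₃ : IsNbrTriple G b₃ b₂ b₄ a₃) (hb₄ : IsNbrTriple G b₄ b₃ b₅ a₄)
    (hb₅ : IsNbrTriple G b₅ b₄ a₅ q) (hp : p ∉ [a₁, a₂, a₃, a₄, a₅, b₁, b₂, b₃, b₄, b₅]) :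
    p = q ∨ G.Adj p q := by
  simp only [List.mem_cons, not_or] at hp
  obtain ⟨c, d, n⟩ := exists_isNbrTriple hreg ha₅.adj₃.symm
  have h := hG _ _ _ _ _ _ ha₅.rotate.rotate n
  have hadj : ∀ u v, G.Adj u v → G.Adj v u ∧ u ≠ v := fun u v e => ⟨e.symm, e.ne⟩
  replace ha₂ := ha₂.facts
  replace ha₃ := ha₃.facts
  replace ha₄ := ha₄.facts
  replace ha₅ := ha₅.facts
  replace hb₃ := hb₃.facts
  replace hb₄ := hb₄.facts
  replace hb₅ := hb₅.facts
  replace n := n.facts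
  clear hreg hG
  grind (splits := 30)

/-- A ladder cannot end in a triangle. -/
theorem ne_of_ladder_end (hreg : ∀ v : V, G.degree v = 3) (hG : ShortCycleCondition G)
    (ha₂ : IsNbrTriple G a₂ a₁ a₃ b₂) (ha₃ : IsNbrTriple G a₃ a₂ a₄ b₃)
    (ha₄ : IsNbrTriple G a₄ a₃ a₅ b₄)
    (ha₅ : IsNbrTriple G a₅ a₄ b₅ p) (hb₃ : IsNbrTriple G b₃ b₂ b₄ a₃)
    (hb₄ : IsNbrTriple G b₄ b₃ b₅ a₄) (hb₅ : IsNbrTriple G b₅ b₄ a₅ q)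
    (hp : p ∉ [a₁, a₂, a₃, a₄, a₅, b₁, b₂, b₃, b₄, b₅]) : p ≠ q := by
  simp only [List.mem_cons, not_or] at hp
  rintro rfl
  obtain ⟨z, n⟩ := exists_isNbrTriple_of_ne hreg ha₅.adj₃.symm hb₅.adj₃.symm ha₅.adj₂.ne
  obtain ⟨c, d, n'⟩ := exists_isNbrTriple hreg n.adj₃.symm
  have h := hG _ _ _ _ _ _ n.rotate.rotate n'
  have hadj : ∀ u v, G.Adj u v → G.Adj v u ∧ u ≠ v := fun u v e => ⟨e.symm, e.ne⟩
  replace ha₂ := ha₂.facts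
  replace ha₃ := ha₃.facts
  replace ha₄ := ha₄.facts
  replace ha₅ := ha₅.facts
  replace hb₃ := hb₃.facts
  replace hb₄ := hb₄.facts
  replace hb₅ := hb₅.facts
  replace n := n.facts
  replace n' := n'.facts
  clear hreg hG
  grind (splits := 30)

end LadderEnd

namespace IsLadder

variable {G : SimpleGraph V} {k : ℕ} {x y : ℕ → V}

theorem symm (h : IsLadder G k x y) : IsLadder G k y x where
  adj_x := h.adj_y
  adj_y := h.adj_x
  rung i hi := (h.rung i hi).symm
  inj_x := h.inj_y
  inj_y := h.inj_x
  ne i hi j hj := (h.ne j hj i hi).symm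

theorem extend (h : IsLadder G k x y) {p q : V} (hp : ∀ i ≤ k, p ≠ x i ∧ p ≠ y i)
    (hq : ∀ i ≤ k, q ≠ x i ∧ q ≠ y i) (hxp : G.Adj (x k) p) (hyq : G.Adj (y k) q)
    (hpq : G.Adj p q) : ∃ x' y', IsLadder G (k + 1) x' y' := by
  obtain ⟨h₁, h₂, h₃, h₄, h₅, h₆⟩ := h
  have hne := hpq.ne
  refine ⟨fun i => if i ≤ k then x i else p, fun i => if i ≤ k then y i else q,
    ?_, ?_, ?_, ?_, ?_, ?_⟩ <;> grind

theorem succ_le_card [Fintype V] (h : IsLadder G k x y) : k + 1 ≤ Fintype.card V := by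
  have : Function.Injective fun i : Fin (k + 1) => x i := fun i j hij =>
    Fin.ext (h.inj_x i (by omega) j (by omega) hij)
  simpa using Fintype.card_le_of_injective _ this

variable [G.LocallyFinite]

theorem isNbrTriple_x (hreg : ∀ v : V, G.degree v = 3) (h : IsLadder G k x y) {i : ℕ}
    (hi : i + 1 < k) : IsNbrTriple G (x (i + 1)) (x i) (x (i + 2)) (y (i + 1)) := by
  refine isNbrTriple_of_adj hreg (h.adj_x i (by omega)).symm (h.adj_x (i + 1) hi)
    (h.rung _ hi.le) (fun e => ?_) (h.ne _ (by omega) _ (by omega)) (h.ne _ (by omega) _ (by omega))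
  have := h.inj_x _ (by omega) _ (by omega) e
  omega

/-- The vertex beyond the end of one side is new or lies on the first rung. -/
theorem eq_or_notMem_of_end (hreg : ∀ v : V, G.degree v = 3) (h : IsLadder G (k + 1) x y) {p : V}
    (hp : IsNbrTriple G (x (k + 1)) (x k) (y (k + 1)) p) :
    p = x 0 ∨ p = y 0 ∨ ∀ i ≤ k + 1, p ≠ x i ∧ p ≠ y i := by
  by_contra! hcon
  obtain ⟨hx₀, hy₀, i, hi, hpi⟩ := hcon
  have hadj := hp.adj₃.symm
  by_cases hx : p = x i
  · subst hx
    obtain ⟨j, rfl⟩ : ∃ j, i = j + 1 := Nat.exists_eq_succ_of_ne_zero (by rintro rfl; exact hx₀ rfl)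
    have hj : j ≠ k := fun e => hadj.ne (by rw [e])
    rcases ((h.isNbrTriple_x hreg (by omega)).adj_iff _).1 hadj with e | e | e
    · have := h.inj_x _ (by omega) _ (by omega) e
      omega
    · have := h.inj_x _ (by omega) _ (by omega) e
      exact hp.ne₁₃ (by rw [show j + 1 = k by omega])
    · exact h.ne _ (by omega) _ (by omega) e
  · have hy := hpi hx
    subst hy
    obtain ⟨j, rfl⟩ : ∃ j, i = j + 1 := Nat.exists_eq_succ_of_ne_zero (by rintro rfl; exact hy₀ rfl)
    have hj : j ≠ k := fun e => hp.ne₂₃ (by rw [e])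
    rcases ((h.symm.isNbrTriple_x hreg (by omega)).adj_iff _).1 hadj with e | e | e
    · exact h.ne _ (by omega) _ (by omega) e
    · exact h.ne _ (by omega) _ (by omega) e
    · have := h.inj_x _ (by omega) _ (by omega) e
      omega

theorem eq_of_adj_start (hreg : ∀ v : V, G.degree v = 3) (h : IsLadder G (k + 2) x y) {v w : V}
    (hw : w = x (k + 2) ∨ w = y (k + 2)) (hadj : G.Adj w (x 0)) (hv : G.Adj v (x 0)) :
    v = x 1 ∨ v = y 0 ∨ v = w := by
  have h₁ : x 1 ≠ w := by
    rintro rfl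
    rcases hw with e | e
    · have := h.inj_x _ (by omega) _ (by omega) e
      omega
    · exact h.ne _ (by omega) _ (by omega) e
  have h₂ : y 0 ≠ w := by
    rintro rfl
    rcases hw with e | e
    · exact h.ne _ (by omega) _ (by omega) e.symm
    · have := h.inj_y _ (by omega) _ (by omega) e
      omega
  exact ((isNbrTriple_of_adj hreg (h.adj_x 0 (by omega)) (h.rung 0 (by omega)) hadj.symm
    (h.ne _ (by omega) _ (by omega)) h₁ h₂).adj_iff v).1 hv.symm

theorem not_adj_start_of_adj_start (hreg : ∀ v : V, G.degree v = 3) (h : IsLadder G (k + 2) x y)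
    (h₁ : G.Adj (x (k + 2)) (x 0)) : ¬ G.Adj (y (k + 2)) (x 0) := fun h₂ => by
  rcases h.eq_of_adj_start hreg (.inl rfl) h₁ h₂ with e | e | e
  · exact h.ne _ (by omega) _ (by omega) e.symm
  · have := h.inj_y _ (by omega) _ (by omega) e
    omega
  · exact h.ne _ (by omega) _ (by omega) e.symm

/-- A long ladder can be extended, or it closes up to a prism or to a Möbius ladder. -/
theorem extend_or_close (hreg : ∀ v : V, G.degree v = 3) (hG : ShortCycleCondition G) {m : ℕ}
    (h : IsLadder G (m + 4) x y) :
    (∃ x' y', IsLadder G (m + 5) x' y') ∨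
      (G.Adj (x (m + 4)) (x 0) ∧ G.Adj (y (m + 4)) (y 0)) ∨
      (G.Adj (x (m + 4)) (y 0) ∧ G.Adj (y (m + 4)) (x 0)) := by
  obtain ⟨p, hp⟩ := exists_isNbrTriple_of_ne hreg (h.adj_x (m + 3) (by omega)).symm
    (h.rung (m + 4) le_rfl) (h.ne _ (by omega) _ (by omega))
  obtain ⟨q, hq⟩ := exists_isNbrTriple_of_ne hreg (h.adj_y (m + 3) (by omega)).symm
    (h.rung (m + 4) le_rfl).symm (h.ne _ (by omega) _ (by omega)).symm
  have out : ∀ {r : V}, (∀ i ≤ m + 4, r ≠ x i ∧ r ≠ y i) →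
      r ∉ [x m, x (m + 1), x (m + 2), x (m + 3), x (m + 4),
        y m, y (m + 1), y (m + 2), y (m + 3), y (m + 4)] ∧
      r ∉ [y m, y (m + 1), y (m + 2), y (m + 3), y (m + 4),
        x m, x (m + 1), x (m + 2), x (m + 3), x (m + 4)] := by
    intro r hr
    have h₀ := hr m (by omega)
    have h₁ := hr (m + 1) (by omega)
    have h₂ := hr (m + 2) (by omega)
    have h₃ := hr (m + 3) (by omega)
    have h₄ := hr (m + 4) (by omega)
    simp [h₀, h₁, h₂, h₃, h₄]
  have tx := fun {i} (hi : i + 1 < m + 4) => h.isNbrTriple_x hreg hi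
  have ty := fun {i} (hi : i + 1 < m + 4) => h.symm.isNbrTriple_x hreg hi
  have hpq : (∀ i ≤ m + 4, p ≠ x i ∧ p ≠ y i) → G.Adj p q := fun hr => by
    have hne := ne_of_ladder_end hreg hG (tx (i := m) (by omega)) (tx (i := m + 1) (by omega))
      (tx (i := m + 2) (by omega)) hp (ty (i := m + 1) (by omega))
      (ty (i := m + 2) (by omega)) hq (out hr).1
    exact (eq_or_adj_of_ladder_end hreg hG (tx (i := m) (by omega))
      (tx (i := m + 1) (by omega)) (tx (i := m + 2) (by omega)) hp (ty (i := m + 1) (by omega))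
      (ty (i := m + 2) (by omega)) hq (out hr).1).resolve_left hne
  have hqp : (∀ i ≤ m + 4, q ≠ x i ∧ q ≠ y i) → G.Adj q p := fun hr => by
    have hne := ne_of_ladder_end hreg hG (ty (i := m) (by omega)) (ty (i := m + 1) (by omega))
      (ty (i := m + 2) (by omega)) hq (tx (i := m + 1) (by omega))
      (tx (i := m + 2) (by omega)) hp (out hr).2
    exact (eq_or_adj_of_ladder_end hreg hG (ty (i := m) (by omega))
      (ty (i := m + 1) (by omega)) (ty (i := m + 2) (by omega)) hq (tx (i := m + 1) (by omega))
      (tx (i := m + 2) (by omega)) hp (out hr).2).resolve_left hne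
  have hout {v w : V} (hw : w = x (m + 4) ∨ w = y (m + 4))
      (hv : ∀ i ≤ m + 4, v ≠ x i ∧ v ≠ y i) :
      (G.Adj w (x 0) → ¬ G.Adj v (x 0)) ∧ (G.Adj w (y 0) → ¬ G.Adj v (y 0)) := by
    have h₀ := hv 0 (by omega)
    have h₁ := hv 1 (by omega)
    have h₄ := hv (m + 4) (by omega)
    refine ⟨fun e₁ e₂ => ?_, fun e₁ e₂ => ?_⟩
    · rcases h.eq_of_adj_start (k := m + 2) hreg hw e₁ e₂ with e | e | e <;> grind
    · rcases h.symm.eq_of_adj_start (k := m + 2) hreg hw.symm e₁ e₂ with e | e | e <;> grind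
  rcases h.eq_or_notMem_of_end hreg hp with rfl | rfl | hp' <;>
    rcases h.symm.eq_or_notMem_of_end hreg hq with rfl | rfl | hq'
  · exact .inr (.inl ⟨hp.adj₃, hq.adj₃⟩)
  · exact absurd hq.adj₃ (h.not_adj_start_of_adj_start (k := m + 2) hreg hp.adj₃)
  · have hq' := fun i hi => (hq' i hi).symm
    exact absurd (hqp hq') ((hout (.inl rfl) hq').1 hp.adj₃)
  · exact absurd hp.adj₃ (h.symm.not_adj_start_of_adj_start (k := m + 2) hreg hq.adj₃)
  · exact .inr (.inr ⟨hp.adj₃, hq.adj₃⟩)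
  · have hq' := fun i hi => (hq' i hi).symm
    exact absurd (hqp hq') ((hout (.inl rfl) hq').2 hp.adj₃)
  · exact absurd (hpq hp') ((hout (.inr rfl) hp').2 hq.adj₃)
  · exact absurd (hpq hp') ((hout (.inr rfl) hp').1 hq.adj₃)
  · exact .inl (h.extend hp' (fun i hi => (hq' i hi).symm) hp.adj₃ hq.adj₃ (hpq hp'))

end IsLadder

/-- A ladder with at least five rungs which cannot be extended closes up. -/
theorem IsLadder.exists_closed {G : SimpleGraph V} [Fintype V] [G.LocallyFinite]
    (hreg : ∀ v : V, G.degree v = 3) (hG : ShortCycleCondition G) {k : ℕ} {x y : ℕ → V}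
    (h : IsLadder G k x y) (hk : 4 ≤ k) :
    ∃ k x y, 4 ≤ k ∧ IsLadder G k x y ∧
      ((G.Adj (x k) (x 0) ∧ G.Adj (y k) (y 0)) ∨ (G.Adj (x k) (y 0) ∧ G.Adj (y k) (x 0))) := by
  obtain ⟨m, rfl⟩ := Nat.exists_eq_add_of_le' hk
  rcases h.extend_or_close hreg hG with ⟨x', y', h'⟩ | hc
  · have := h'.succ_le_card
    exact h'.exists_closed hreg hG (by omega)
  · exact ⟨_, _, _, hk, h, hc⟩
termination_by Fintype.card V - k

/-- A cubic subgraph of a connected cubic graph is the whole graph. -/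
theorem nonempty_iso_of_injective_hom {W : Type*} [Nonempty W] {G : SimpleGraph V}
    [G.LocallyFinite] {H : SimpleGraph W} (hconn : G.Connected) (hreg : ∀ v : V, G.degree v = 3)
    (φ : H →g G) (hφ : Function.Injective φ)
    (hH : ∀ w, ∃ a b c, a ≠ b ∧ a ≠ c ∧ b ≠ c ∧ H.Adj w a ∧ H.Adj w b ∧ H.Adj w c) :
    Nonempty (G ≃g H) := by
  have hnbr : ∀ w v, G.Adj (φ w) v → ∃ w', φ w' = v ∧ H.Adj w w' := fun w v hv => by
    obtain ⟨a, b, c, hab, hac, hbc, ha, hb, hc⟩ := hH w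
    rcases ((isNbrTriple_of_adj hreg (φ.map_adj ha) (φ.map_adj hb) (φ.map_adj hc) (hφ.ne hab)
      (hφ.ne hac) (hφ.ne hbc)).adj_iff v).1 hv with rfl | rfl | rfl
    exacts [⟨_, rfl, ha⟩, ⟨_, rfl, hb⟩, ⟨_, rfl, hc⟩]
  have hsurj : Function.Surjective φ := fun v => by
    obtain ⟨p⟩ := hconn.preconnected (φ (Classical.arbitrary W)) v
    have key : ∀ {u v : V}, G.Walk u v → (∃ w, φ w = u) → ∃ w, φ w = v := fun p => by
      induction p with
      | nil => exact id
      | cons hadj _ ih =>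
        rintro ⟨w, rfl⟩
        obtain ⟨w', hw', -⟩ := hnbr w _ hadj
        exact ih ⟨w', hw'⟩
    exact key p ⟨_, rfl⟩
  refine ⟨RelIso.symm ⟨Equiv.ofBijective φ ⟨hφ, hsurj⟩, fun {a b} => ⟨fun hadj => ?_, φ.map_adj⟩⟩⟩
  obtain ⟨w', hw', hadj'⟩ := hnbr a _ hadj
  rwa [← hφ hw']

/-- A connected cubic graph with diameter at least six contains a ladder with five rungs. -/
theorem exists_isLadder_of_six_le_dist {G : SimpleGraph V} [G.LocallyFinite]
    (hconn : G.Connected) (hreg : ∀ v : V, G.degree v = 3) (hG : ShortCycleCondition G)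
    {u v : V} (huv : 6 ≤ G.dist u v) : ∃ x y, IsLadder G 4 x y := by
  obtain ⟨p, hp⟩ := hconn.exists_walk_length_eq_dist u v
  have hlen : 6 ≤ p.length := hp ▸ huv
  have hdist : ∀ i ≤ 6, G.dist u (p.getVert i) = i := fun i hi => by
    have h₁ := SimpleGraph.dist_le (p.take i)
    have h₂ := SimpleGraph.dist_le (p.drop i)
    have h₃ := hconn.dist_triangle (u := u) (v := p.getVert i) (w := v)
    rw [SimpleGraph.Walk.take_length] at h₁
    rw [SimpleGraph.Walk.drop_length] at h₂
    omega
  have hadj : ∀ i < 6, G.Adj (p.getVert i) (p.getVert (i + 1)) := fun i hi =>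
    p.adj_getVert_succ (by omega)
  have htriple : ∀ i < 5, ∃ y,
      IsNbrTriple G (p.getVert (i + 1)) (p.getVert i) (p.getVert (i + 2)) y := fun i hi => by
    refine exists_isNbrTriple_of_ne hreg (hadj i (by omega)).symm (hadj (i + 1) (by omega))
      fun e => ?_
    have h₁ := hdist i (by omega)
    have h₂ := hdist (i + 2) (by omega)
    rw [e] at h₁
    omega
  obtain ⟨y₁, n₁⟩ := htriple 0 (by omega)
  obtain ⟨y₂, n₂⟩ := htriple 1 (by omega)
  obtain ⟨y₃, n₃⟩ := htriple 2 (by omega)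
  obtain ⟨y₄, n₄⟩ := htriple 3 (by omega)
  obtain ⟨y₅, n₅⟩ := htriple 4 (by omega)
  have hpath : IsLevelPath G (fun w => (G.dist u w : ℤ)) (p.getVert 0) (p.getVert 1)
      (p.getVert 2) (p.getVert 3) (p.getVert 4) (p.getVert 5) (p.getVert 6) y₁ y₂ y₃ y₄ y₅ := by
    refine ⟨fun a b hab => ?_, ?_, ?_, ?_, ?_, ?_, ?_, ?_, n₁, n₂, n₃, n₄, n₅⟩
    · have := hconn.dist_triangle (u := u) (v := b) (w := a)
      rw [SimpleGraph.dist_eq_one_iff_adj.2 hab.symm] at this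
      exact_mod_cast this
    all_goals exact_mod_cast hdist _ (by omega)
  exact hpath.exists_isLadder hreg hG

theorem IsLadder.nonempty_iso_prismGraph {G : SimpleGraph V} [G.LocallyFinite]
    (hconn : G.Connected) (hreg : ∀ v : V, G.degree v = 3) {k : ℕ} {x y : ℕ → V}
    (h : IsLadder G k x y) (hk : 2 ≤ k) (hx : G.Adj (x k) (x 0)) (hy : G.Adj (y k) (y 0)) :
    Nonempty (G ≃g prismGraph (k + 1)) := by
  obtain ⟨m, rfl⟩ := Nat.exists_eq_add_of_le' hk
  have hne : ∀ i : Fin (m + 3), i + 1 ≠ i - 1 := fun i e => by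
    have : (1 + 1 : Fin (m + 3)) = 0 := by
      have e' := congrArg (fun j => j - i + 1) e
      simpa using e'
    simp only [Fin.ext_iff, Fin.val_add, Fin.val_one, Fin.val_zero] at this
    rw [Nat.mod_eq_of_lt (by omega)] at this
    omega
  have hval : ∀ i : Fin (m + 3),
      ((i + 1 : Fin (m + 3)) : ℕ) = if (i : ℕ) = m + 2 then 0 else (i : ℕ) + 1 := fun i => by
    rw [Fin.val_add_one]
    simp [Fin.ext_iff]
  have hcycle : ∀ z : ℕ → V, (∀ i < m + 2, G.Adj (z i) (z (i + 1))) → G.Adj (z (m + 2)) (z 0) →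
      ∀ i j : Fin (m + 3), (cycleGraph (m + 3)).Adj i j → G.Adj (z i) (z j) := by
    intro z hz hz₀
    have hsucc : ∀ i : Fin (m + 3), G.Adj (z i) (z (i + 1 : Fin (m + 3))) := fun i => by
      rw [hval]
      split_ifs with hi
      · rwa [hi]
      · exact hz i (by omega)
    intro i j hadj
    rcases SimpleGraph.cycleGraph_adj.1 hadj with e | e
    · rw [sub_eq_iff_eq_add'.1 e]
      exact (hsucc j).symm
    · rw [sub_eq_iff_eq_add'.1 e]
      exact hsucc i
  let φ : prismGraph (m + 3) →g G :=
    { toFun := fun w => if w.2 = 0 then x w.1 else y w.1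
      map_rel' := by
        rintro ⟨i, s⟩ ⟨j, t⟩ hadj
        rw [prismGraph, SimpleGraph.boxProd_adj] at hadj
        rcases hadj with ⟨hadj, rfl⟩ | ⟨hst, rfl⟩
        · dsimp only
          split_ifs
          · exact hcycle x h.adj_x hx _ _ hadj
          · exact hcycle y h.adj_y hy _ _ hadj
        · have := h.rung i (by omega)
          have := this.symm
          fin_cases s <;> fin_cases t <;> simp_all }
  refine nonempty_iso_of_injective_hom hconn hreg φ ?_ ?_
  · rintro ⟨i, s⟩ ⟨j, t⟩ (hij : (if s = 0 then x i else y i) = if t = 0 then x j else y j)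
    have h₁ := h.inj_x i (by omega) j (by omega)
    have h₂ := h.inj_y i (by omega) j (by omega)
    have h₃ := h.ne i (by omega) j (by omega)
    have h₄ := h.ne j (by omega) i (by omega)
    fin_cases s <;> fin_cases t <;> simp_all [Fin.ext_iff, eq_comm]
  · rintro ⟨i, s⟩
    have hs : s ≠ s + 1 := by fin_cases s <;> decide
    refine ⟨(i + 1, s), (i - 1, s), (i, s + 1), by simp [hne], by simp, by simp, ?_, ?_, ?_⟩ <;>
      simp [prismGraph, SimpleGraph.boxProd_adj, SimpleGraph.cycleGraph_adj]

theorem IsLadder.nonempty_iso_mobiusLadder {G : SimpleGraph V} [G.LocallyFinite]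
    (hconn : G.Connected) (hreg : ∀ v : V, G.degree v = 3) {k : ℕ} {x y : ℕ → V}
    (h : IsLadder G k x y) (hk : 2 ≤ k) (hx : G.Adj (x k) (y 0)) (hy : G.Adj (y k) (x 0)) :
    Nonempty (G ≃g mobiusLadder (k + 1)) := by
  have hval : ∀ (i : ZMod (2 * (k + 1))) (j : ℕ), (i + (j : ZMod (2 * (k + 1)))).val =
      (i.val + j) % (2 * (k + 1)) := fun i j => by
    rw [ZMod.val_add, ZMod.val_natCast, Nat.add_mod_mod]
  have hlt : ∀ i : ZMod (2 * (k + 1)), i.val < 2 * (k + 1) := fun i => ZMod.val_lt i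
  let z : ℕ → V := fun i => if i ≤ k then x i else y (i - (k + 1))
  have hz : ∀ i j : ZMod (2 * (k + 1)),
      j = i + (1 : ℕ) ∨ j = i + ((k + 1 : ℕ) : ZMod (2 * (k + 1))) → G.Adj (z i.val) (z j.val) := by
    have hx' := h.adj_x
    have hy' := h.adj_y
    have hr := h.rung
    intro i j hij
    have hi := hlt i
    have hj : j.val = (i.val + 1) % (2 * (k + 1)) ∨ j.val = (i.val + (k + 1)) % (2 * (k + 1)) :=
      hij.imp (fun e => by rw [e, hval]) (fun e => by rw [e, hval])
    generalize i.val = a at hi hj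
    generalize j.val = b at hj
    simp only [z]
    rcases hj with rfl | rfl
    · rcases lt_trichotomy a k with ha | rfl | ha
      · rw [Nat.mod_eq_of_lt (by omega), if_pos ha.le, if_pos (by omega)]
        exact hx' a ha
      · rw [Nat.mod_eq_of_lt (by omega), if_pos le_rfl, if_neg (by omega), Nat.sub_self]
        exact hx
      · rw [if_neg (by omega)]
        rcases eq_or_ne a (2 * k + 1) with rfl | ha'
        · rw [show 2 * k + 1 + 1 = 2 * (k + 1) by ring, Nat.mod_self, if_pos (Nat.zero_le k),
            show 2 * k + 1 - (k + 1) = k by omega]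
          exact hy
        · rw [Nat.mod_eq_of_lt (by omega), if_neg (by omega),
            show a + 1 - (k + 1) = a - (k + 1) + 1 by omega]
          exact hy' _ (by omega)
    · rcases le_or_gt a k with ha | ha
      · rw [Nat.mod_eq_of_lt (by omega), if_pos ha, if_neg (by omega), Nat.add_sub_cancel]
        exact hr a ha
      · rw [Nat.mod_eq_sub_mod (by omega), Nat.mod_eq_of_lt (by omega), if_neg (by omega),
          if_pos (by omega), show a + (k + 1) - 2 * (k + 1) = a - (k + 1) by omega]
        exact (hr _ (by omega)).symm
  let φ : mobiusLadder (k + 1) →g G :=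
    { toFun := fun i => z i.val
      map_rel' := by
        intro i j hadj
        rw [mobiusLadder, SimpleGraph.fromRel_adj] at hadj
        rcases hadj.2 with e | e
        · exact hz i j (by simpa using e)
        · exact (hz j i (by simpa using e)).symm }
  refine nonempty_iso_of_injective_hom hconn hreg φ ?_ ?_
  · intro i j (hij : z i.val = z j.val)
    have := hlt i
    have := hlt j
    refine ZMod.val_injective _ ?_
    simp only [z] at hij
    split_ifs at hij with h₁ h₂ h₂
    · exact h.inj_x _ h₁ _ h₂ hij
    · exact absurd hij (h.ne _ h₁ _ (by omega))
    · exact absurd hij.symm (h.ne _ h₂ _ (by omega))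
    · have := h.inj_y _ (by omega) _ (by omega) hij
      omega
  · intro i
    have hne : ∀ a b : ℕ, a < 2 * (k + 1) → b < 2 * (k + 1) → a ≠ b →
        i + (a : ZMod (2 * (k + 1))) ≠ i + (b : ZMod (2 * (k + 1))) := fun a b ha hb hab e => by
      have e' := congrArg ZMod.val (add_left_cancel e)
      rw [ZMod.val_natCast, ZMod.val_natCast, Nat.mod_eq_of_lt ha, Nat.mod_eq_of_lt hb] at e'
      exact hab e'
    have hne₀ : ∀ a : ℕ, a < 2 * (k + 1) → a ≠ 0 → i ≠ i + (a : ZMod (2 * (k + 1))) :=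
      fun a ha ha₀ => by simpa using hne 0 a (by omega) ha ha₀.symm
    have hback : i = i + (2 * k + 1 : ℕ) + 1 := by
      have := ZMod.natCast_self (2 * (k + 1))
      rw [add_assoc, ← Nat.cast_add_one, show 2 * k + 1 + 1 = 2 * (k + 1) by ring, this, add_zero]
    refine ⟨i + (1 : ℕ), i + (2 * k + 1 : ℕ), i + (k + 1 : ℕ),
      hne _ _ (by omega) (by omega) (by omega), hne _ _ (by omega) (by omega) (by omega),
      hne _ _ (by omega) (by omega) (by omega), ?_, ?_, ?_⟩ <;>
      rw [mobiusLadder, SimpleGraph.fromRel_adj]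
    · exact ⟨hne₀ _ (by omega) (by omega), .inl (.inl (by simp))⟩
    · exact ⟨hne₀ _ (by omega) (by omega), .inr (.inl hback)⟩
    · exact ⟨hne₀ _ (by omega) (by omega), .inl (.inr rfl)⟩

/-- A finite, connected, 3-regular simple graph with nonnegative Ricci
curvature and diameter at least 6 is isomorphic to a prism graph or a Möbius ladder. -/
theorem cubic_classification_finite (G : SimpleGraph V) [Fintype V] [G.LocallyFinite]
    (hconn : G.Connected) (hreg : ∀ v : V, G.degree v = 3) (hric : NonnegRicci G)
    (hdiam : ∃ u v : V, 6 ≤ G.dist u v) :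
    (∃ n : ℕ, 3 ≤ n ∧ Nonempty (G ≃g prismGraph n)) ∨
      (∃ n : ℕ, Nonempty (G ≃g mobiusLadder n)) := by
  have hG := shortCycleCondition_of_nonnegRicci hconn hreg hric
  obtain ⟨u, v, huv⟩ := hdiam
  obtain ⟨x₀, y₀, h₀⟩ := exists_isLadder_of_six_le_dist hconn hreg hG huv
  obtain ⟨k, x, y, hk, h, ⟨hx, hy⟩ | ⟨hx, hy⟩⟩ := h₀.exists_closed hreg hG le_rfl
  · exact .inl ⟨k + 1, by omega, h.nonempty_iso_prismGraph hconn hreg (by omega) hx hy⟩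
  · exact .inr ⟨k + 1, h.nonempty_iso_mobiusLadder hconn hreg (by omega) hx hy⟩
end

section
/- Let G = (V,E) be an infinite, connected, 3-regular simple graph with nonnegative Ricci curvature (κ(u,v) ≥ 0 for every edge {u,v}). Then G is isomorphic to the infinite ladder P_ℤ □ K_2, the Cartesian product of the two-sided infinite path with the complete graph on two vertices. -/
open SimpleGraph

variable {V : Type*}

/-- The two-sided infinite path `P_ℤ`: vertices `ℤ`, with `n ∼ n+1`. -/
def pathZ : SimpleGraph ℤ := SimpleGraph.fromRel (fun m n => n = m + 1)

/-- The infinite ladder `P_ℤ □ K_2`. -/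
def infiniteLadder : SimpleGraph (ℤ × Fin 2) :=
  pathZ.boxProd (⊤ : SimpleGraph (Fin 2))

namespace SimpleGraph

/-- The neighbours of `v` are exactly the three distinct vertices `x`, `y`, `z`. -/
structure HasNeighbors (G : SimpleGraph V) (v x y z : V) : Prop where
  ne₁₂ : x ≠ y
  ne₁₃ : x ≠ z
  ne₂₃ : y ≠ z
  adj_iff : ∀ w, G.Adj v w ↔ w = x ∨ w = y ∨ w = z

namespace HasNeighbors

variable {G : SimpleGraph V} {v x y z : V}

lemma adj₁ (h : G.HasNeighbors v x y z) : G.Adj v x := (h.adj_iff x).2 (by simp)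

lemma adj₂ (h : G.HasNeighbors v x y z) : G.Adj v y := (h.adj_iff y).2 (by simp)

lemma adj₃ (h : G.HasNeighbors v x y z) : G.Adj v z := (h.adj_iff z).2 (by simp)

lemma rotate (h : G.HasNeighbors v x y z) : G.HasNeighbors v y z x :=
  ⟨h.ne₂₃, h.ne₁₂.symm, h.ne₁₃.symm, fun w => by rw [h.adj_iff]; tauto⟩

lemma swap (h : G.HasNeighbors v x y z) : G.HasNeighbors v y x z :=
  ⟨h.ne₁₂.symm, h.ne₂₃, h.ne₁₃, fun w => by rw [h.adj_iff]; tauto⟩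

lemma lapl_eq [G.LocallyFinite] (h : G.HasNeighbors v x y z) (f : V → ℝ) :
    lapl G f v = f x + f y + f z - 3 * f v := by
  classical
  have hN : G.neighborFinset v = {x, y, z} := by
    ext w
    simp [h.adj_iff]
  rw [lapl, hN, Finset.sum_insert (by simp [h.ne₁₂, h.ne₁₃]),
    Finset.sum_insert (by simp [h.ne₂₃]), Finset.sum_singleton]
  ring

end HasNeighbors

section Dist

variable {G : SimpleGraph V}

lemma dist_le_dist_add_one (hconn : G.Connected) (b : V) {x y : V} (h : G.Adj x y) :
    G.dist b x ≤ G.dist b y + 1 := by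
  have := hconn.dist_triangle (u := b) (v := y) (w := x)
  rwa [dist_eq_one_iff_adj.2 h.symm] at this

lemma abs_sub_le_dist (hconn : G.Connected) {f : V → ℤ}
    (hf : ∀ x y, G.Adj x y → f x ≤ f y + 1) (x y : V) : |f x - f y| ≤ G.dist x y := by
  obtain ⟨p, hp⟩ := hconn.exists_walk_length_eq_dist x y
  rw [← hp]
  clear hp
  induction p with
  | nil => simp
  | cons h p ih =>
    rw [abs_le] at ih ⊢
    have h₁ := hf _ _ h
    have h₂ := hf _ _ h.symm
    rw [Walk.length_cons]
    push_cast
    omega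

/-- Every vertex other than `x` has a neighbour one step closer to `x`. -/
lemma exists_adj_dist_add_one_eq (hconn : G.Connected) {x y : V} (h : y ≠ x) :
    ∃ z, G.Adj z y ∧ G.dist x z + 1 = G.dist x y := by
  obtain ⟨p, hp⟩ := hconn.exists_walk_length_eq_dist y x
  cases p with
  | nil => exact absurd rfl h
  | @cons _ z _ hyz p =>
    refine ⟨z, hyz.symm, le_antisymm ?_ (dist_le_dist_add_one hconn x hyz)⟩
    rw [dist_comm (u := x) (v := y), ← hp, Walk.length_cons, dist_comm]
    exact Nat.succ_le_succ (dist_le p)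

/-- Every vertex `x` has a neighbour one step closer to a given vertex `y ≠ x`. -/
lemma exists_adj_dist_eq_add_one (hconn : G.Connected) {x y : V} (h : y ≠ x) :
    ∃ z, G.Adj x z ∧ G.dist z y + 1 = G.dist x y := by
  obtain ⟨z, hz, h'⟩ := exists_adj_dist_add_one_eq hconn h.symm
  exact ⟨z, hz.symm, by rwa [dist_comm, dist_comm (u := x)]⟩

end Dist

/-- The pair of sequences `s`, `t` spans a one-sided infinite ladder. -/
structure IsHalfLadder (G : SimpleGraph V) (s t : ℕ → V) : Prop where
  left : ∀ n, G.Adj (s n) (s (n + 1))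
  right : ∀ n, G.Adj (t n) (t (n + 1))
  rung : ∀ n, G.Adj (s n) (t n)
  left_injective : Function.Injective s
  right_injective : Function.Injective t
  left_ne_right : ∀ m n, s m ≠ t n

lemma IsHalfLadder.symm {G : SimpleGraph V} {s t : ℕ → V} (h : G.IsHalfLadder s t) :
    G.IsHalfLadder t s :=
  ⟨h.right, h.left, fun n => (h.rung n).symm, h.right_injective, h.left_injective,
    fun m n => (h.left_ne_right n m).symm⟩

section Cubic

variable {G : SimpleGraph V} [G.LocallyFinite]

lemma exists_hasNeighbors (hreg : ∀ v, G.degree v = 3) {v x y : V} (hx : G.Adj v x)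
    (hy : G.Adj v y) (hxy : x ≠ y) : ∃ z, G.HasNeighbors v x y z := by
  classical
  obtain ⟨p, q, r, hpq, hpr, hqr, h⟩ := Finset.card_eq_three.1 (hreg v)
  have hN : ∀ w, G.Adj v w ↔ w = p ∨ w = q ∨ w = r := fun w => by
    rw [← mem_neighborFinset, h]; simp
  have key : G.HasNeighbors v p q r := ⟨hpq, hpr, hqr, hN⟩
  rcases (hN x).1 hx with rfl | rfl | rfl <;> rcases (hN y).1 hy with rfl | rfl | rfl <;>
    first
    | exact absurd rfl hxy
    | exact ⟨_, key⟩
    | exact ⟨_, key.rotate⟩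
    | exact ⟨_, key.rotate.rotate⟩
    | exact ⟨_, key.swap⟩
    | exact ⟨_, key.rotate.swap⟩
    | exact ⟨_, key.rotate.rotate.swap⟩

lemma exists_hasNeighbors_of_adj (hreg : ∀ v, G.degree v = 3) {v x : V} (hx : G.Adj v x) :
    ∃ y z, G.HasNeighbors v x y z := by
  classical
  obtain ⟨y, hy, hyx⟩ := Finset.exists_mem_ne (s := G.neighborFinset v)
    (by rw [card_neighborFinset_eq_degree, hreg]; norm_num) x
  exact ⟨y, exists_hasNeighbors hreg hx (by simpa using hy) hyx.symm⟩

/-- Nonnegative curvature of the edge `uv`, tested against an integer-valued `1`-Lipschitz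
function. -/
lemma add_le_add_four_of_nonnegRicci (hconn : G.Connected) (hric : NonnegRicci G)
    {u v a b c d : V} (hu : G.HasNeighbors u v a b) (hv : G.HasNeighbors v u c d) {f : V → ℤ}
    (hf : ∀ x y, G.Adj x y → f x ≤ f y + 1) (huv : f v = f u + 1) :
    f c + f d ≤ f a + f b + 4 := by
  have hlap : ∀ g : V → ℝ,
      lapl G g u - lapl G g v = g a + g b - g c - g d + 4 * (g v - g u) := fun g => by
    rw [hu.lapl_eq, hv.lapl_eq]; ring
  have hle : ricci G u v ≤ lapl G (fun x => (f x : ℝ)) u - lapl G (fun x => (f x : ℝ)) v := by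
    refine csInf_le ⟨-8, ?_⟩ ⟨fun x => (f x : ℝ), fun x y => ?_, ?_, rfl⟩
    · rintro r ⟨g, hg, hg1, rfl⟩
      rw [hlap, hg1]
      have adj_le : ∀ {x y}, G.Adj x y → |g x - g y| ≤ 1 := fun {x y} h => by
        simpa [dist_eq_one_iff_adj.2 h] using hg x y
      have h₁ := abs_le.1 (adj_le hu.adj₂)
      have h₂ := abs_le.1 (adj_le hu.adj₃)
      have h₃ := abs_le.1 (adj_le hv.adj₂)
      have h₄ := abs_le.1 (adj_le hv.adj₃)
      linarith [h₁.1, h₁.2, h₂.1, h₂.2, h₃.1, h₃.2, h₄.1, h₄.2]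
    · have := abs_sub_le_dist hconn hf x y
      simp only
      exact_mod_cast this
    · simp [huv]
  have h0 := (hric u v hu.adj₁).trans hle
  rw [hlap] at h0
  simp only [huv] at h0
  push_cast at h0
  have : (f c : ℝ) + f d ≤ f a + f b + 4 := by linarith
  exact_mod_cast this

/-- A locally finite infinite connected graph contains a geodesic ray from every vertex. -/
lemma exists_geodesic_ray [Infinite V] (hconn : G.Connected) (o : V) :
    ∃ r : ℕ → V, (∀ n, G.Adj (r n) (r (n + 1))) ∧ ∀ n, G.dist o (r n) = n := by
  classical
  let D : V → Set V := fun v => {w | G.dist o w = G.dist o v + G.dist v w}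
  have step : ∀ v : {v // (D v).Infinite}, ∃ w : {v // (D v).Infinite},
      G.Adj v w ∧ G.dist o w = G.dist o v + 1 := by
    rintro ⟨v, hv⟩
    by_contra! hno
    refine hv (((Set.finite_singleton v).union
      ((G.neighborFinset v).finite_toSet.biUnion (t := fun w =>
        if G.dist o w = G.dist o v + 1 then D w else ∅) ?_)).subset ?_)
    · intro w hw
      split_ifs with h
      · by_contra hinf
        exact hno ⟨w, hinf⟩ (by simpa using hw) h
      · exact Set.finite_empty
    · intro y hy
      by_cases hyv : y = v
      · exact Or.inl hyv
      obtain ⟨z, hvz, hz⟩ := exists_adj_dist_eq_add_one hconn hyv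
      have hy' : G.dist o y = G.dist o v + G.dist v y := hy
      have h₁ := dist_le_dist_add_one hconn o hvz.symm
      have h₂ := hconn.dist_triangle (u := o) (v := z) (w := y)
      have h₃ : G.dist o z = G.dist o v + 1 := by omega
      refine Or.inr (Set.mem_biUnion (x := z) (by simpa using hvz) ?_)
      rw [if_pos h₃]
      change G.dist o y = G.dist o z + G.dist z y
      omega
  choose next hadj hdist using step
  have ho : (D o).Infinite := by
    have : D o = Set.univ := by ext; simp [D]
    rw [this]
    exact Set.infinite_univ
  refine ⟨fun n => (next^[n] ⟨o, ho⟩).1, fun n => ?_, fun n => ?_⟩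
  · simp only [Function.iterate_succ_apply']
    exact hadj _
  · induction n with
    | zero => simp
    | succ n ih => simp only [Function.iterate_succ_apply', hdist, ih]

/-- Along a geodesic ray of a cubic graph of nonnegative curvature the third neighbours are
eventually at constant height relative to the ray. -/
lemma eventually_dist_eq_add (hconn : G.Connected) (hric : NonnegRicci G) {o : V} {r b : ℕ → V}
    (hr : ∀ n, G.dist o (r n) = n)
    (hb : ∀ n, G.HasNeighbors (r (n + 1)) (r n) (r (n + 2)) (b n)) :
    ∃ N e, e ≤ 2 ∧ ∀ n, N ≤ n → G.dist o (b n) = n + e := by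
  have hlow : ∀ n, n ≤ G.dist o (b n) ∧ G.dist o (b n) ≤ n + 2 := fun n => by
    have h₁ := dist_le_dist_add_one hconn o (hb n).adj₃
    have h₂ := dist_le_dist_add_one hconn o (hb n).adj₃.symm
    rw [hr] at h₁ h₂
    omega
  have hanti : Antitone fun n => G.dist o (b n) - n := by
    refine antitone_nat_of_succ_le fun n => ?_
    have := add_le_add_four_of_nonnegRicci hconn hric (hb n).rotate.rotate.rotate.swap
      (hb (n + 1)) (f := fun x => (G.dist o x : ℤ))
      (fun x y h => by exact_mod_cast dist_le_dist_add_one hconn o h)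
      (by simp only [hr]; push_cast; ring)
    simp only [hr] at this
    push_cast at this
    omega
  obtain ⟨N, hN⟩ := WellFoundedGT.monotone_chain_condition
    (⟨fun n => OrderDual.toDual (G.dist o (b n) - n), hanti⟩ : ℕ →o ℕᵒᵈ)
  refine ⟨N, G.dist o (b N) - N, ?_, fun n hn => ?_⟩
  · have := hlow N
    omega
  · have h₁ : G.dist o (b N) - N = G.dist o (b n) - n := hN n hn
    have := hlow n
    omega

/-- Consecutive third neighbours of a geodesic ray are adjacent once their relative height is
constant. -/
lemma adj_third_neighbors (hconn : G.Connected) (hric : NonnegRicci G) {o : V} {r b : ℕ → V}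
    (hr : ∀ n, G.dist o (r n) = n)
    (hb : ∀ n, G.HasNeighbors (r (n + 1)) (r n) (r (n + 2)) (b n)) {N e : ℕ} (he : e ≤ 2)
    (hbe : ∀ n, N ≤ n → G.dist o (b n) = n + e) {n : ℕ} (hn : N ≤ n) :
    G.Adj (b (n + 1)) (b (n + 2)) := by
  by_contra hnadj
  have hrb : ∀ k m, N ≤ m → r k ≠ b m := by
    intro k m hm h
    have h₁ := hbe m hm
    rw [← h, hr] at h₁
    have hbm := hb m
    interval_cases e
    · exact hbm.ne₁₃ (by rw [← h, h₁]; rfl)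
    · exact hbm.adj₃.ne (by rw [← h, h₁])
    · exact hbm.ne₂₃ (by rw [← h, h₁])
  have hbb : b (n + 1) ≠ b (n + 2) := fun h => by
    have h₁ := hbe (n + 1) (by omega)
    rw [h, hbe (n + 2) (by omega)] at h₁
    omega
  have hdist_two : ∀ {x y}, x ≠ y → ¬ G.Adj x y → 2 ≤ G.dist x y := fun {x y} h h' => by
    have h₁ : G.dist x y ≠ 0 := fun h0 => h (hconn.dist_eq_zero_iff.1 h0)
    have h₂ : G.dist x y ≠ 1 := fun h0 => h' (dist_eq_one_iff_adj.1 h0)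
    omega
  have hadj_rb : ∀ k m, N ≤ m → G.Adj (r (k + 1)) (b m) → N ≤ k → m = k := by
    intro k m hm h hk
    rcases ((hb k).adj_iff _).1 h with h | h | h
    · exact absurd h.symm (hrb _ _ hm)
    · exact absurd h.symm (hrb _ _ hm)
    · have h₁ := hbe m hm
      rw [h, hbe k hk] at h₁
      omega
  have hbc := hdist_two hbb hnadj
  have hu := (hb (n + 1)).swap
  have hv := hb (n + 2)
  have lip := fun x {y z} (h : G.Adj y z) => dist_le_dist_add_one hconn x h
  have hB := hbe (n + 1) (by omega)
  have hC := hbe (n + 2) (by omega)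
  have dpos : ∀ {x y}, x ≠ y → 1 ≤ G.dist x y := fun h => hconn.pos_dist_of_ne h
  rcases Nat.eq_zero_or_pos e with rfl | hepos
  · -- Raise the distance from `o` at `b (n + 2)`.
    have h₁ : 2 ≤ G.dist (b (n + 2)) (r (n + 1)) := by
      rw [dist_comm]
      refine hdist_two (hrb _ _ (by omega)) fun h => ?_
      have := hadj_rb n (n + 2) (by omega) h hn
      omega
    have h₂ := dpos (hrb (n + 2) (n + 2) (by omega)).symm
    have h₃ := dpos (hrb (n + 3) (n + 2) (by omega)).symm
    have h₄ := dpos (hrb (n + 4) (n + 2) (by omega)).symm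
    rw [dist_comm] at hbc
    have e₁ := hr (n + 1)
    have e₂ := hr (n + 2)
    have e₃ := hr (n + 3)
    have e₄ := hr (n + 4)
    have := add_le_add_four_of_nonnegRicci hconn hric hu hv
      (f := fun x => max (G.dist o x : ℤ) (n + 3 - G.dist (b (n + 2)) x))
      (fun x y h => by
        have := lip o h
        have := lip (b (n + 2)) h.symm
        omega)
      (by simp only [add_assoc, Nat.reduceAdd] at *; omega)
    simp only [add_assoc, Nat.reduceAdd, dist_self] at *
    omega
  · -- Lower the distance from `o` at `b (n + 1)`.
    have h₁ := dpos (hrb (n + 1) (n + 1) (by omega)).symm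
    have h₂ := dpos (hrb (n + 2) (n + 1) (by omega)).symm
    have h₃ : 2 ≤ G.dist (b (n + 1)) (r (n + 3)) := by
      rw [dist_comm]
      refine hdist_two (hrb _ _ (by omega)) fun h => ?_
      have := hadj_rb (n + 2) (n + 1) (by omega) h (by omega)
      omega
    have h₄ : 4 ≤ G.dist (b (n + 1)) (r (n + 4)) + e := by
      have h₅ : 2 ≤ G.dist (b (n + 1)) (r (n + 4)) := by
        rw [dist_comm]
        refine hdist_two (hrb _ _ (by omega)) fun h => ?_
        have := hadj_rb (n + 3) (n + 1) (by omega) h (by omega)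
        omega
      by_contra! hlt
      obtain ⟨p, hp, hpd⟩ := exists_adj_dist_add_one_eq hconn (hrb (n + 4) (n + 1) (by omega))
      have hop := hconn.dist_triangle (u := o) (v := b (n + 1)) (w := p)
      rcases ((hb (n + 3)).adj_iff p).1 hp.symm with rfl | rfl | rfl
      · omega
      · have := hr (n + 3 + 2)
        omega
      · have := hbe (n + 3) (by omega)
        omega
    have e₁ := hr (n + 1)
    have e₂ := hr (n + 2)
    have e₃ := hr (n + 3)
    have e₄ := hr (n + 4)
    have := add_le_add_four_of_nonnegRicci hconn hric hu hv
      (f := fun x => min (G.dist o x : ℤ) (n + e + G.dist (b (n + 1)) x))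
      (fun x y h => by
        have := lip o h
        have := lip (b (n + 1)) h
        omega)
      (by simp only [add_assoc, Nat.reduceAdd] at *; omega)
    simp only [add_assoc, Nat.reduceAdd, dist_self] at *
    omega

lemma exists_isHalfLadder [Infinite V] (hconn : G.Connected) (hreg : ∀ v, G.degree v = 3)
    (hric : NonnegRicci G) : ∃ s t, G.IsHalfLadder s t := by
  obtain ⟨o⟩ := hconn.nonempty
  obtain ⟨r, hadj, hr⟩ := exists_geodesic_ray hconn o
  have : ∀ n, ∃ b, G.HasNeighbors (r (n + 1)) (r n) (r (n + 2)) b := fun n =>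
    exists_hasNeighbors hreg (hadj n).symm (hadj (n + 1)) fun h => by
      have := hr n
      rw [h, hr] at this
      omega
  choose b hb using this
  obtain ⟨N, e, he, hbe⟩ := eventually_dist_eq_add hconn hric hr hb
  refine ⟨fun n => r (N + 1 + n + 1), fun n => b (N + 1 + n), fun n => hadj _, fun n => ?_,
    fun n => (hb _).adj₃, fun m n h => ?_, fun m n h => ?_, fun k n h => ?_⟩
  · have := adj_third_neighbors hconn hric hr hb he hbe (n := N + n) (by omega)
    convert this using 2 <;> omega
  · have := congrArg (G.dist o) h
    simp only [hr] at this
    omega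
  · have := congrArg (G.dist o) h
    rw [hbe _ (by omega), hbe _ (by omega)] at this
    omega
  · have h₁ := congrArg (G.dist o) h
    rw [hbe _ (by omega), hr] at h₁
    have hbm := hb (N + 1 + n)
    rw [h₁] at h
    interval_cases e
    · exact hbm.ne₁₃ h
    · exact hbm.adj₃.ne h
    · exact hbm.ne₂₃ h

lemma hasNeighbors_of_adj (hreg : ∀ v, G.degree v = 3) {v x y z : V} (hx : G.Adj v x)
    (hy : G.Adj v y) (hz : G.Adj v z) (hxy : x ≠ y) (hxz : x ≠ z) (hyz : y ≠ z) :
    G.HasNeighbors v x y z := by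
  obtain ⟨w, hw⟩ := exists_hasNeighbors hreg hx hy hxy
  rcases (hw.adj_iff z).1 hz with rfl | rfl | rfl
  · exact absurd rfl hxz
  · exact absurd rfl hyz
  · exact hw

namespace IsHalfLadder

variable {s t : ℕ → V}

lemma hasNeighbors_succ (h : G.IsHalfLadder s t) (hreg : ∀ v, G.degree v = 3) (n : ℕ) :
    G.HasNeighbors (s (n + 1)) (s n) (s (n + 2)) (t (n + 1)) :=
  hasNeighbors_of_adj hreg (h.left n).symm (h.left (n + 1)) (h.rung (n + 1))
    (h.left_injective.ne (by omega)) (h.left_ne_right _ _) (h.left_ne_right _ _)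

lemma exists_hasNeighbors_zero (h : G.IsHalfLadder s t) (hreg : ∀ v, G.degree v = 3) :
    ∃ v, G.HasNeighbors (s 0) (s 1) (t 0) v :=
  exists_hasNeighbors hreg (h.left 0) (h.rung 0) (h.left_ne_right _ _)

/-- The third neighbour of a corner of a half-ladder lies outside the half-ladder. -/
lemma ne_of_hasNeighbors_zero (h : G.IsHalfLadder s t) (hreg : ∀ v, G.degree v = 3) {v : V}
    (hv : G.HasNeighbors (s 0) (s 1) (t 0) v) (k : ℕ) : s k ≠ v ∧ t k ≠ v := by
  constructor <;> rintro rfl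
  · rcases k with _ | k
    · exact hv.adj₃.ne rfl
    rcases ((h.hasNeighbors_succ hreg k).adj_iff _).1 hv.adj₃.symm with h' | h' | h'
    · obtain rfl := h.left_injective h'
      exact hv.ne₁₃ rfl
    · have := h.left_injective h'
      omega
    · exact h.left_ne_right _ _ h'
  · rcases k with _ | k
    · exact hv.ne₂₃ rfl
    rcases ((h.symm.hasNeighbors_succ hreg k).adj_iff _).1 hv.adj₃.symm with h' | h' | h'
    · exact h.left_ne_right _ _ h'
    · exact h.left_ne_right _ _ h'
    · have := h.left_injective h'
      omega

/-- An edge leaving a half-ladder from its left side is the one at the corner. -/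
lemma eq_zero_of_adj (h : G.IsHalfLadder s t) (hreg : ∀ v, G.degree v = 3) {v : V}
    (hv : G.HasNeighbors (s 0) (s 1) (t 0) v) {k : ℕ} {y : V} (hy : G.Adj (s k) y)
    (hs : ∀ n, s n ≠ y) (ht : ∀ n, t n ≠ y) : k = 0 ∧ y = v := by
  rcases k with _ | k
  · rcases (hv.adj_iff y).1 hy with rfl | rfl | rfl
    · exact absurd rfl (hs 1)
    · exact absurd rfl (ht 0)
    · exact ⟨rfl, rfl⟩
  · rcases ((h.hasNeighbors_succ hreg k).adj_iff y).1 hy with rfl | rfl | rfl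
    · exact absurd rfl (hs k)
    · exact absurd rfl (hs (k + 2))
    · exact absurd rfl (ht (k + 1))

lemma eq_corner_of_adj (h : G.IsHalfLadder s t) (hreg : ∀ v, G.degree v = 3) {v w : V}
    (hv : G.HasNeighbors (s 0) (s 1) (t 0) v) (hw : G.HasNeighbors (t 0) (t 1) (s 0) w)
    {x y : V} (hxy : G.Adj x y) (hx : x ∈ Set.range s ∪ Set.range t)
    (hy : y ∉ Set.range s ∪ Set.range t) : x = s 0 ∧ y = v ∨ x = t 0 ∧ y = w := by
  have hs : ∀ n, s n ≠ y := fun n hn => hy (Or.inl ⟨n, hn⟩)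
  have ht : ∀ n, t n ≠ y := fun n hn => hy (Or.inr ⟨n, hn⟩)
  rcases hx with ⟨k, rfl⟩ | ⟨k, rfl⟩
  · obtain ⟨rfl, rfl⟩ := h.eq_zero_of_adj hreg hv hxy hs ht
    exact Or.inl ⟨rfl, rfl⟩
  · obtain ⟨rfl, rfl⟩ := h.symm.eq_zero_of_adj hreg hw hxy ht hs
    exact Or.inr ⟨rfl, rfl⟩

/-- If both corners of a half-ladder had the same third neighbour `v`, the remaining edge at `v`
would be a bridge of negative curvature. -/
lemma corner_neighbors_ne (h : G.IsHalfLadder s t) (hconn : G.Connected)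
    (hreg : ∀ v, G.degree v = 3) (hric : NonnegRicci G) {v w : V}
    (hv : G.HasNeighbors (s 0) (s 1) (t 0) v) (hw : G.HasNeighbors (t 0) (t 1) (s 0) w) :
    v ≠ w := by
  classical
  rintro rfl
  obtain ⟨p, hp⟩ := exists_hasNeighbors hreg hv.adj₃.symm hw.adj₃.symm (h.left_ne_right 0 0)
  obtain ⟨c, d, hcd⟩ := exists_hasNeighbors_of_adj hreg hp.adj₃.symm
  set H := Set.range s ∪ Set.range t
  have hs0 : s 0 ∈ H := Or.inl ⟨0, rfl⟩
  have ht0 : t 0 ∈ H := Or.inr ⟨0, rfl⟩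
  have hvH : v ∉ H := by
    rintro (⟨k, hk⟩ | ⟨k, hk⟩)
    · exact (h.ne_of_hasNeighbors_zero hreg hv k).1 hk
    · exact (h.ne_of_hasNeighbors_zero hreg hv k).2 hk
  have hF : ∀ {x y}, G.Adj x y → x ∈ H → y ∉ H → (x = s 0 ∨ x = t 0) ∧ y = v :=
    fun {x y} hxy hx hy => by
      rcases h.eq_corner_of_adj hreg hv hw hxy hx hy with ⟨rfl, rfl⟩ | ⟨rfl, rfl⟩ <;> simp
  have hpH : p ∉ H := fun hpH => by
    rcases (hF hp.adj₃.symm hpH hvH).1 with h' | h'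
    · exact hp.ne₁₃ h'.symm
    · exact hp.ne₂₃ h'.symm
  have hpv : p ≠ v := hp.adj₃.ne'
  have hout : ∀ {x}, G.Adj p x → x ∉ H := fun {x} hpx hx => hpv (hF hpx.symm hx hpH).2
  have := add_le_add_four_of_nonnegRicci hconn hric hp.rotate.rotate hcd
    (f := fun x => if x ∈ H then -1 else if x = v then 0 else if x = p then 1 else 2)
    (fun x y hxy => by
      by_cases hy : y ∈ H
      · by_cases hx : x ∈ H
        · simp [hx, hy]
        · obtain ⟨-, rfl⟩ := hF hxy.symm hy hx
          simp [hx, hy]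
      · by_cases hyv : y = v
        · subst hyv
          rcases (hp.adj_iff x).1 hxy.symm with rfl | rfl | rfl <;>
            simp [hs0, ht0, hvH, hpH, hpv]
        · by_cases hyp : y = p <;> simp only [hy, hyv, hyp, if_true, if_false] <;>
            split_ifs <;> simp_all)
    (by simp [hvH, hpH, hpv])
  have hc := hout hcd.adj₂
  have hd := hout hcd.adj₃
  simp [hs0, ht0, hc, hd, hcd.ne₁₂.symm, hcd.ne₁₃.symm, hcd.adj₂.ne', hcd.adj₃.ne'] at this

/-- The third neighbours of the two corners of a half-ladder are adjacent. -/
lemma corner_neighbors_adj (h : G.IsHalfLadder s t) (hconn : G.Connected)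
    (hreg : ∀ v, G.degree v = 3) (hric : NonnegRicci G) {v w : V}
    (hv : G.HasNeighbors (s 0) (s 1) (t 0) v) (hw : G.HasNeighbors (t 0) (t 1) (s 0) w) :
    G.Adj v w := by
  classical
  by_contra hvw
  have hne := h.corner_neighbors_ne hconn hreg hric hv hw
  obtain ⟨c, d, hcd⟩ := exists_hasNeighbors_of_adj hreg hv.adj₃.symm
  set H := Set.range s ∪ Set.range t
  have hs0 : s 0 ∈ H := Or.inl ⟨0, rfl⟩
  have ht0 : t 0 ∈ H := Or.inr ⟨0, rfl⟩
  have hs1 : s 1 ∈ H := Or.inl ⟨1, rfl⟩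
  have hvH : v ∉ H := by
    rintro (⟨k, hk⟩ | ⟨k, hk⟩)
    · exact (h.ne_of_hasNeighbors_zero hreg hv k).1 hk
    · exact (h.ne_of_hasNeighbors_zero hreg hv k).2 hk
  have hF : ∀ {x y}, G.Adj x y → x ∈ H → y ∉ H → x = s 0 ∧ y = v ∨ x = t 0 ∧ y = w :=
    fun {x y} => h.eq_corner_of_adj hreg hv hw
  have hout : ∀ {x}, G.Adj v x → x ≠ s 0 → x ∉ H ∧ x ≠ v ∧ x ≠ w := fun {x} hvx hxs => by
    refine ⟨fun hx => ?_, hvx.ne', fun hxw => hvw (hxw ▸ hvx)⟩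
    rcases hF hvx.symm hx hvH with h' | h'
    · exact hxs h'.1
    · exact hne h'.2
  have h10 : s 1 ≠ s 0 := h.left_injective.ne (by omega)
  have := add_le_add_four_of_nonnegRicci hconn hric hv.rotate.rotate hcd
    (f := fun x => if x ∈ H then (if x = s 0 ∨ x = t 0 then 0 else -1)
      else if x = v ∨ x = w then 1 else 2)
    (fun x y hxy => by
      by_cases hy : y ∈ H
      · by_cases hx : x ∈ H
        · simp only [hx, hy, if_true]
          split_ifs <;> simp
        · rcases hF hxy.symm hy hx with ⟨rfl, rfl⟩ | ⟨rfl, rfl⟩ <;> simp [hx, hy]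
      · simp only [hy, if_false]
        split_ifs <;> simp)
    (by simp [hvH, hs0])
  have hc := hout hcd.adj₂ hcd.ne₁₂.symm
  have hd := hout hcd.adj₃ hcd.ne₁₃.symm
  simp [hs1, ht0, hc, hd, h10, h.left_ne_right] at this

/-- A half-ladder can be prolonged by one rung at its end. -/
lemma exists_extend (h : G.IsHalfLadder s t) (hconn : G.Connected)
    (hreg : ∀ v, G.degree v = 3) (hric : NonnegRicci G) :
    ∃ s' t', G.IsHalfLadder s' t' ∧ (∀ n, s' (n + 1) = s n) ∧ ∀ n, t' (n + 1) = t n := by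
  obtain ⟨v, hv⟩ := h.exists_hasNeighbors_zero hreg
  obtain ⟨w, hw⟩ := h.symm.exists_hasNeighbors_zero hreg
  have hne := h.corner_neighbors_ne hconn hreg hric hv hw
  have hadj := h.corner_neighbors_adj hconn hreg hric hv hw
  have hvn := h.ne_of_hasNeighbors_zero hreg hv
  have hwn := h.symm.ne_of_hasNeighbors_zero hreg hw
  refine ⟨fun n => n.casesOn v s, fun n => n.casesOn w t, ⟨?_, ?_, ?_, ?_, ?_, ?_⟩,
    fun n => rfl, fun n => rfl⟩
  · rintro (_ | n)
    · exact hv.adj₃.symm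
    · exact h.left n
  · rintro (_ | n)
    · exact hw.adj₃.symm
    · exact h.right n
  · rintro (_ | n)
    · exact hadj
    · exact h.rung n
  · rintro (_ | m) (_ | n) hmn
    · rfl
    · exact absurd hmn.symm (hvn n).1
    · exact absurd hmn (hvn m).1
    · exact congrArg _ (h.left_injective hmn)
  · rintro (_ | m) (_ | n) hmn
    · rfl
    · exact absurd hmn.symm (hwn n).1
    · exact absurd hmn (hwn m).1
    · exact congrArg _ (h.right_injective hmn)
  · rintro (_ | m) (_ | n) hmn
    · exact hne hmn
    · exact (hvn n).2 hmn.symm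
    · exact (hwn m).2 hmn
    · exact h.left_ne_right _ _ hmn

/-- A half-ladder can be prolonged to a two-sided ladder. -/
lemma exists_ladder (h : G.IsHalfLadder s t) (hconn : G.Connected)
    (hreg : ∀ v, G.degree v = 3) (hric : NonnegRicci G) :
    ∃ S T : ℤ → V, (∀ z, G.Adj (S z) (S (z + 1))) ∧ (∀ z, G.Adj (T z) (T (z + 1))) ∧
      (∀ z, G.Adj (S z) (T z)) ∧ Function.Injective S ∧ Function.Injective T ∧
      ∀ y z, S y ≠ T z := by
  have step : ∀ L : {L : (ℕ → V) × (ℕ → V) // G.IsHalfLadder L.1 L.2},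
      ∃ L' : {L : (ℕ → V) × (ℕ → V) // G.IsHalfLadder L.1 L.2},
        (∀ n, L'.1.1 (n + 1) = L.1.1 n) ∧ ∀ n, L'.1.2 (n + 1) = L.1.2 n := by
    rintro ⟨⟨s, t⟩, hL⟩
    obtain ⟨s', t', h', hs, ht⟩ := hL.exists_extend hconn hreg hric
    exact ⟨⟨(s', t'), h'⟩, hs, ht⟩
  choose next hs ht using step
  let L := fun k : ℕ => next^[k] ⟨(s, t), h⟩
  have hLs : ∀ j k n, (L (k + j)).1.1 (n + j) = (L k).1.1 n := by
    intro j k n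
    induction j with
    | zero => rfl
    | succ j ih =>
      rw [← ih, ← hs (L (k + j)), ← Function.iterate_succ_apply' next]
      rfl
  have hLt : ∀ j k n, (L (k + j)).1.2 (n + j) = (L k).1.2 n := by
    intro j k n
    induction j with
    | zero => rfl
    | succ j ih =>
      rw [← ih, ← ht (L (k + j)), ← Function.iterate_succ_apply' next]
      rfl
  let S : ℤ → V := fun z => (L z.natAbs).1.1 (z + z.natAbs).toNat
  let T : ℤ → V := fun z => (L z.natAbs).1.2 (z + z.natAbs).toNat
  have hS : ∀ (z : ℤ) (k n : ℕ), z = n - k → S z = (L k).1.1 n := by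
    intro z k n hz
    change (L z.natAbs).1.1 (z + z.natAbs).toNat = _
    rw [← hLs k z.natAbs, ← hLs z.natAbs k n, add_comm k z.natAbs]
    exact congrArg _ (by omega)
  have hT : ∀ (z : ℤ) (k n : ℕ), z = n - k → T z = (L k).1.2 n := by
    intro z k n hz
    change (L z.natAbs).1.2 (z + z.natAbs).toNat = _
    rw [← hLt k z.natAbs, ← hLt z.natAbs k n, add_comm k z.natAbs]
    exact congrArg _ (by omega)
  have common : ∀ y z : ℤ, ∃ k m n : ℕ, y = m - k ∧ z = n - k := fun y z =>
    ⟨y.natAbs + z.natAbs, (y + (y.natAbs + z.natAbs)).toNat, (z + (y.natAbs + z.natAbs)).toNat,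
      by omega, by omega⟩
  refine ⟨S, T, fun z => ?_, fun z => ?_, fun z => ?_, fun y z hyz => ?_, fun y z hyz => ?_,
    fun y z hyz => ?_⟩
  · obtain ⟨k, n, -, hz, -⟩ := common z z
    rw [hS z k n hz, hS (z + 1) k (n + 1) (by push_cast; omega)]
    exact (L k).2.left n
  · obtain ⟨k, n, -, hz, -⟩ := common z z
    rw [hT z k n hz, hT (z + 1) k (n + 1) (by push_cast; omega)]
    exact (L k).2.right n
  · obtain ⟨k, n, -, hz, -⟩ := common z z
    rw [hS z k n hz, hT z k n hz]
    exact (L k).2.rung n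
  · obtain ⟨k, m, n, hy, hz⟩ := common y z
    rw [hS y k m hy, hS z k n hz] at hyz
    have := (L k).2.left_injective hyz
    omega
  · obtain ⟨k, m, n, hy, hz⟩ := common y z
    rw [hT y k m hy, hT z k n hz] at hyz
    have := (L k).2.right_injective hyz
    omega
  · obtain ⟨k, m, n, hy, hz⟩ := common y z
    rw [hS y k m hy, hT z k n hz] at hyz
    exact (L k).2.left_ne_right _ _ hyz

end IsHalfLadder

/-- A two-sided ladder contained in a connected cubic graph is the whole graph. -/
lemma nonempty_iso_infiniteLadder (hconn : G.Connected) (hreg : ∀ v, G.degree v = 3)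
    {S T : ℤ → V} (hS : ∀ z, G.Adj (S z) (S (z + 1))) (hT : ∀ z, G.Adj (T z) (T (z + 1)))
    (hST : ∀ z, G.Adj (S z) (T z)) (hSi : Function.Injective S) (hTi : Function.Injective T)
    (hne : ∀ y z, S y ≠ T z) : Nonempty (G ≃g infiniteLadder) := by
  have hS' : ∀ z, G.Adj (S z) (S (z - 1)) := fun z => by simpa using (hS (z - 1)).symm
  have hT' : ∀ z, G.Adj (T z) (T (z - 1)) := fun z => by simpa using (hT (z - 1)).symm
  have hSN : ∀ z, G.HasNeighbors (S z) (S (z - 1)) (S (z + 1)) (T z) := fun z =>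
    hasNeighbors_of_adj hreg (hS' z) (hS z) (hST z) (hSi.ne (by omega)) (hne _ _) (hne _ _)
  have hTN : ∀ z, G.HasNeighbors (T z) (T (z - 1)) (T (z + 1)) (S z) := fun z =>
    hasNeighbors_of_adj hreg (hT' z) (hT z) (hST z).symm (hTi.ne (by omega))
      (hne _ _).symm (hne _ _).symm
  let φ : ℤ × Fin 2 → V := fun p => if p.2 = 0 then S p.1 else T p.1
  have hφ0 : ∀ z, φ (z, 0) = S z := fun z => rfl
  have hφ1 : ∀ z, φ (z, 1) = T z := fun z => rfl
  have hinj : Function.Injective φ := by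
    rintro ⟨y, i⟩ ⟨z, j⟩ hyz
    fin_cases i <;> fin_cases j
    · exact congrArg (·, 0) (hSi hyz)
    · exact absurd hyz (hne y z)
    · exact absurd hyz.symm (hne z y)
    · exact congrArg (·, 1) (hTi hyz)
  have hclosed : ∀ x y, G.Adj x y → x ∈ Set.range φ → y ∈ Set.range φ := by
    rintro x y hxy ⟨⟨z, i⟩, rfl⟩
    fin_cases i
    · rcases ((hSN z).adj_iff y).1 hxy with rfl | rfl | rfl
      exacts [⟨(z - 1, 0), rfl⟩, ⟨(z + 1, 0), rfl⟩, ⟨(z, 1), rfl⟩]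
    · rcases ((hTN z).adj_iff y).1 hxy with rfl | rfl | rfl
      exacts [⟨(z - 1, 1), rfl⟩, ⟨(z + 1, 1), rfl⟩, ⟨(z, 0), rfl⟩]
  have hsurj : Function.Surjective φ := by
    intro y
    obtain ⟨p⟩ := hconn.preconnected (φ (0, 0)) y
    have : ∀ {a b} (_ : G.Walk a b), a ∈ Set.range φ → b ∈ Set.range φ := by
      intro a b p
      induction p with
      | nil => exact id
      | cons h _ ih => exact fun ha => ih (hclosed _ _ h ha)
    exact this p ⟨_, rfl⟩
  refine ⟨(RelIso.mk (Equiv.ofBijective φ ⟨hinj, hsurj⟩) ?_ : infiniteLadder ≃g G).symm⟩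
  rintro ⟨y, i⟩ ⟨z, j⟩
  simp only [infiniteLadder, boxProd_adj, pathZ, fromRel_adj, top_adj]
  fin_cases i <;> fin_cases j
  · change G.Adj (S y) (S z) ↔ _
    simp [(hSN y).adj_iff, hSi.eq_iff, hne]
    omega
  · change G.Adj (S y) (T z) ↔ _
    simp [(hSN y).adj_iff, hTi.eq_iff, (hne _ _).symm, eq_comm]
  · change G.Adj (T y) (S z) ↔ _
    simp [(hTN y).adj_iff, hSi.eq_iff, hne, eq_comm]
  · change G.Adj (T y) (T z) ↔ _
    simp [(hTN y).adj_iff, hTi.eq_iff, (hne _ _).symm]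
    omega

end Cubic

end SimpleGraph

/-- An infinite, connected, 3-regular simple graph with nonnegative Ricci
curvature is isomorphic to the infinite ladder `P_ℤ □ K_2`. -/
theorem cubic_classification_infinite (G : SimpleGraph V) [Infinite V] [G.LocallyFinite]
    (hconn : G.Connected) (hreg : ∀ v : V, G.degree v = 3) (hric : NonnegRicci G) :
    Nonempty (G ≃g infiniteLadder) := by
  obtain ⟨s, t, h⟩ := SimpleGraph.exists_isHalfLadder hconn hreg hric
  obtain ⟨S, T, hS, hT, hST, hSi, hTi, hne⟩ := h.exists_ladder hconn hreg hric
  exact SimpleGraph.nonempty_iso_infiniteLadder hconn hreg hS hT hST hSi hTi hne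
end

section
/- Let G be a finite, connected, simple graph with maximum degree at most 3, nonnegative Ricci curvature, and diameter at least 6, and let P = v_0 v_1 ⋯ v_l be a diameter path of G with l ≥ 6. If deg(v_i) = 2 for all 1 ≤ i ≤ l − 1, then either V(G) = {v_0, …, v_l} and G equals the path P, or G is isomorphic to a cycle graph C_n for some n. -/
open SimpleGraph

variable {V : Type*}

/-- Two distinct neighbours of a vertex of degree at most two are its only neighbours. -/
lemma eq_or_eq_of_adj_of_degree_le_two {G : SimpleGraph V} [G.LocallyFinite] {p a b y : V}
    (hp : G.degree p ≤ 2) (ha : G.Adj p a) (hb : G.Adj p b) (hab : a ≠ b) (hy : G.Adj p y) :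
    y = a ∨ y = b := by
  classical
  by_contra! h
  have hsub : ({y, a, b} : Finset V) ⊆ G.neighborFinset p := by
    intro z hz
    simp only [Finset.mem_insert, Finset.mem_singleton] at hz
    rw [mem_neighborFinset]
    rcases hz with rfl | rfl | rfl <;> assumption
  have hcard := Finset.card_le_card hsub
  rw [Finset.card_eq_three.mpr ⟨y, a, b, h.1, h.2, hab, rfl⟩, card_neighborFinset_eq_degree]
    at hcard
  omega

/-- The curvature of an edge is bounded above by every admissible Laplacian difference. -/
lemma ricci_le {G : SimpleGraph V} [G.LocallyFinite] (u v : V) {f : V → ℝ}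
    (hf : ∀ x y : V, |f x - f y| ≤ (G.dist x y : ℝ)) (huv : f v - f u = 1) :
    ricci G u v ≤ lapl G f u - lapl G f v := by
  refine csInf_le ⟨-(G.degree u : ℝ) - G.degree v, ?_⟩ ⟨f, hf, huv, rfl⟩
  rintro r ⟨g, hg, -, rfl⟩
  have hbound : ∀ x, |lapl G g x| ≤ G.degree x := by
    intro x
    calc |lapl G g x| ≤ ∑ y ∈ G.neighborFinset x, |g y - g x| := Finset.abs_sum_le_sum_abs _ _
      _ ≤ ∑ _y ∈ G.neighborFinset x, (1 : ℝ) := by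
        refine Finset.sum_le_sum fun y hy => (hg y x).trans ?_
        rw [mem_neighborFinset] at hy
        rw [dist_eq_one_iff_adj.mpr hy.symm, Nat.cast_one]
      _ = G.degree x := by simp
  have hu := abs_le.mp (hbound u)
  have hv := abs_le.mp (hbound v)
  linarith [hu.1, hv.2]

lemma SimpleGraph.Connected.exists_adj_dist_succ_eq {G : SimpleGraph V} (hconn : G.Connected)
    {x c : V} {n : ℕ} (h : G.dist x c = n + 1) : ∃ y, G.Adj x y ∧ G.dist y c = n := by
  obtain ⟨p, hp⟩ := hconn.exists_walk_length_eq_dist x c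
  cases p with
  | nil => simp at h
  | @cons _ y _ hxy q =>
    refine ⟨y, hxy, ?_⟩
    have hle := dist_le q
    have htri := hconn.dist_triangle (u := x) (v := y) (w := c)
    rw [dist_eq_one_iff_adj.mpr hxy] at htri
    rw [Walk.length_cons] at hp
    omega

/-- In nonnegative curvature, a vertex from which a chain of degree-two vertices emanates has
degree at most two, unless it is adjacent to a later vertex of the chain. -/
lemma NonnegRicci.degree_le_two_of_chain {G : SimpleGraph V} [G.LocallyFinite]
    (hric : NonnegRicci G) (hconn : G.Connected) {a b c d e : V}
    (hab : G.Adj a b) (hbc : G.Adj b c) (hac : a ≠ c)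
    (hb : ∀ y, G.Adj b y → y = a ∨ y = c) (hc : ∀ y, G.Adj c y → y = b ∨ y = d)
    (hd : ∀ y, G.Adj d y → y = c ∨ y = e)
    (nac : ¬ G.Adj a c) (nad : ¬ G.Adj a d) (nae : ¬ G.Adj a e) : G.degree a ≤ 2 := by
  classical
  have hlip : ∀ x y : V, |(G.dist x c : ℝ) - G.dist y c| ≤ (G.dist x y : ℝ) := by
    intro x y
    have h₁ := hconn.dist_triangle (u := x) (v := y) (w := c)
    have h₂ := hconn.dist_triangle (u := y) (v := x) (w := c)
    rw [G.dist_comm (u := y) (v := x)] at h₂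
    rw [abs_le]
    constructor <;> [have := h₂; have := h₁] <;> rify at this <;> linarith
  have hdist_b : G.dist b c = 1 := dist_eq_one_iff_adj.mpr hbc
  have hdist_a : G.dist a c = 2 := by
    have h₁ := hconn.one_lt_dist_of_ne_of_not_adj hac nac
    have h₂ := hconn.dist_triangle (u := a) (v := b) (w := c)
    rw [dist_eq_one_iff_adj.mpr hab] at h₂
    omega
  have hfar : ∀ x, G.Adj a x → x ≠ b → 3 ≤ G.dist x c := by
    intro x hax hxb
    have hxc : x ≠ c := by rintro rfl; exact nac hax
    have nxc : ¬ G.Adj x c := by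
      intro h
      rcases hc x h.symm with rfl | rfl
      exacts [hxb rfl, nad hax]
    have hlt := hconn.one_lt_dist_of_ne_of_not_adj hxc nxc
    by_contra! hlt'
    obtain ⟨y, hxy, hyc⟩ := hconn.exists_adj_dist_succ_eq (n := 1) (x := x) (c := c) (by omega)
    rw [dist_eq_one_iff_adj] at hyc
    rcases hc y hyc.symm with rfl | rfl
    · rcases hb x hxy.symm with rfl | rfl
      exacts [hax.ne rfl, hxc rfl]
    · rcases hd x hxy.symm with rfl | rfl
      exacts [hxc rfl, nae hax]
  have hcurv := (hric b a hab.symm).trans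
    (ricci_le b a (f := fun x => (G.dist x c : ℝ)) hlip (by
      simp only [hdist_a, hdist_b]; norm_num))
  have hnb : G.neighborFinset b = {a, c} := by
    ext y
    simp only [mem_neighborFinset, Finset.mem_insert, Finset.mem_singleton]
    exact ⟨hb y, by rintro (rfl | rfl); exacts [hab.symm, hbc]⟩
  have hlap_b : lapl G (fun x => (G.dist x c : ℝ)) b = 0 := by
    rw [lapl, hnb, Finset.sum_pair hac, hdist_a, hdist_b, dist_self]
    norm_num
  have hlap_a : (G.degree a : ℝ) - 2 ≤ lapl G (fun x => (G.dist x c : ℝ)) a := by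
    have hmem : b ∈ G.neighborFinset a := by rwa [mem_neighborFinset]
    have hsum : ∑ _x ∈ (G.neighborFinset a).erase b, (1 : ℝ) ≤
        ∑ x ∈ (G.neighborFinset a).erase b, ((G.dist x c : ℝ) - G.dist a c) := by
      refine Finset.sum_le_sum fun x hx => ?_
      rw [Finset.mem_erase, mem_neighborFinset] at hx
      have := hfar x hx.2 hx.1
      rify at this
      rw [hdist_a]
      push_cast
      linarith
    rw [lapl, ← Finset.add_sum_erase _ _ hmem, hdist_b]
    have hcard := Finset.card_erase_add_one hmem
    rw [card_neighborFinset_eq_degree] at hcard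
    rify at hcard
    rw [Finset.sum_const, nsmul_eq_mul, mul_one] at hsum
    rw [hdist_a] at hsum ⊢
    push_cast at hsum ⊢
    linarith
  have : (G.degree a : ℝ) ≤ 2 := by linarith
  exact_mod_cast this

/-- An injective homomorphism into a connected graph that does not increase degrees is an
isomorphism. -/
lemma SimpleGraph.Connected.nonempty_iso_of_degree_le {W : Type*} [Nonempty W]
    {H : SimpleGraph W} {G : SimpleGraph V} [H.LocallyFinite] [G.LocallyFinite]
    (hconn : G.Connected) (f : H →g G) (hf : Function.Injective f)
    (hdeg : ∀ i, G.degree (f i) ≤ H.degree i) : Nonempty (G ≃g H) := by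
  classical
  have hlift : ∀ i y, G.Adj (f i) y → ∃ j, H.Adj i j ∧ f j = y := by
    intro i y hy
    have heq : (H.neighborFinset i).image f = G.neighborFinset (f i) := by
      refine Finset.eq_of_subset_of_card_le ?_ ?_
      · intro z hz
        obtain ⟨j, hj, rfl⟩ := Finset.mem_image.mp hz
        rw [mem_neighborFinset] at hj ⊢
        exact f.map_adj hj
      · rw [Finset.card_image_of_injective _ hf]
        simpa using hdeg i
    rw [← mem_neighborFinset, ← heq] at hy
    simpa using hy
  have hsurj : Function.Surjective f := by
    intro y
    obtain ⟨i⟩ := ‹Nonempty W›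
    obtain ⟨p⟩ := hconn (f i) y
    generalize hx : f i = x at p
    induction p generalizing i with
    | nil => exact ⟨i, hx⟩
    | cons h q ih =>
      subst hx
      obtain ⟨j, -, hj⟩ := hlift i _ h
      exact ih j hj
  refine ⟨(RelIso.mk (Equiv.ofBijective f ⟨hf, hsurj⟩) ?_).symm⟩
  intro i j
  refine ⟨fun h => ?_, fun h => f.map_adj h⟩
  obtain ⟨k, hk, hkj⟩ := hlift i _ h
  rwa [hf hkj] at hk

/-- A connected graph of maximum degree two that contains a cycle is a cycle graph. -/
lemma SimpleGraph.Connected.exists_iso_cycleGraph {G : SimpleGraph V} [G.LocallyFinite]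
    (hconn : G.Connected) (hdeg : ∀ x, G.degree x ≤ 2) (hcyc : ¬ G.IsAcyclic) :
    ∃ n : ℕ, 3 ≤ n ∧ Nonempty (G ≃g cycleGraph n) := by
  simp only [IsAcyclic, not_forall, not_not] at hcyc
  obtain ⟨x, p, hp⟩ := hcyc
  have hlen := hp.three_le_length
  obtain ⟨f⟩ := (cycleGraph_isContained_iff (G := G) hlen).mpr ⟨x, p, hp, rfl⟩
  obtain ⟨m, hm⟩ := Nat.exists_eq_add_of_le' hlen
  rw [hm] at f
  refine ⟨m + 3, by omega, hconn.nonempty_iso_of_degree_le f.toHom f.injective fun i => ?_⟩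
  rw [cycleGraph_degree_three_le]
  exact hdeg _

/-- In a connected graph of maximum degree two, the distance from a leaf is injective. -/
lemma SimpleGraph.Connected.dist_injective_of_degree_le_one {G : SimpleGraph V}
    [G.LocallyFinite] (hconn : G.Connected) (hdeg : ∀ x, G.degree x ≤ 2) {z : V}
    (hz : G.degree z ≤ 1) : Function.Injective fun x => G.dist x z := by
  suffices h : ∀ n x y, G.dist x z = n → G.dist y z = n → x = y from
    fun x y hxy => h _ x y hxy rfl
  intro n
  induction n with
  | zero =>
    intro x y hx hy
    rw [hconn.dist_eq_zero_iff] at hx hy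
    rw [hx, hy]
  | succ n ih =>
    intro x y hx hy
    obtain ⟨p, hxp, hp⟩ := hconn.exists_adj_dist_succ_eq hx
    obtain ⟨q, hyq, hq⟩ := hconn.exists_adj_dist_succ_eq hy
    obtain rfl := ih p q hp hq
    cases n with
    | zero =>
      rw [hconn.dist_eq_zero_iff] at hp
      subst hp
      rw [← card_neighborFinset_eq_degree, Finset.card_le_one] at hz
      exact hz x (by simpa using hxp.symm) y (by simpa using hyq.symm)
    | succ m =>
      obtain ⟨r, hpr, hr⟩ := hconn.exists_adj_dist_succ_eq hp
      have hrx : r ≠ x := by rintro rfl; omega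
      rcases eq_or_eq_of_adj_of_degree_le_two (hdeg p) hpr hxp.symm hrx hyq.symm with h | h
      · subst h; omega
      · exact h.symm

/-- Adjacent vertices of a geodesic sequence are consecutive. -/
lemma SimpleGraph.Connected.eq_succ_of_adj_of_geodesic {G : SimpleGraph V}
    (hconn : G.Connected) {l : ℕ} {v : ℕ → V} (hadj : ∀ i < l, G.Adj (v i) (v (i + 1)))
    (hgeo : G.dist (v 0) (v l) = l) {i j : ℕ} (hij : i < j) (hj : j ≤ l)
    (h : G.Adj (v i) (v j)) : j = i + 1 := by
  have hle : ∀ k i, i + k ≤ l → G.dist (v i) (v (i + k)) ≤ k := by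
    intro k
    induction k with
    | zero => simp
    | succ k ih =>
      intro i hk
      have h₁ := ih i (by omega)
      have h₂ := hconn.dist_triangle (u := v i) (v := v (i + k)) (w := v (i + (k + 1)))
      rw [dist_eq_one_iff_adj.mpr (show G.Adj (v (i + k)) (v (i + (k + 1))) from hadj (i + k) (by omega))]
        at h₂
      omega
  have h₁ := hle i 0 (by omega)
  have h₂ := hle (l - j) j (by omega)
  rw [Nat.add_sub_cancel' hj] at h₂
  rw [Nat.zero_add] at h₁
  have h₃ := hconn.dist_triangle (u := v 0) (v := v i) (w := v l)
  have h₄ := hconn.dist_triangle (u := v i) (v := v j) (w := v l)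
  rw [dist_eq_one_iff_adj.mpr h] at h₄
  omega

/-- In nonnegative curvature, if the interior of a geodesic of length at least six consists of
degree-two vertices, then every vertex has degree at most two. -/
lemma NonnegRicci.degree_le_two_of_geodesic {G : SimpleGraph V} [G.LocallyFinite]
    (hric : NonnegRicci G) (hconn : G.Connected) {l : ℕ} (hl : 6 ≤ l) {v : ℕ → V}
    (hadj : ∀ i < l, G.Adj (v i) (v (i + 1)))
    (hinj : ∀ i ≤ l, ∀ j ≤ l, v i = v j → i = j)
    (hgeo : G.dist (v 0) (v l) = l)
    (hdeg2 : ∀ i : ℕ, 1 ≤ i → i ≤ l - 1 → G.degree (v i) = 2) (x : V) : G.degree x ≤ 2 := by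
  have hnbr : ∀ i, i + 2 ≤ l → ∀ y, G.Adj (v (i + 1)) y → y = v i ∨ y = v (i + 2) := by
    intro i hi y hy
    refine eq_or_eq_of_adj_of_degree_le_two (hdeg2 (i + 1) (by omega) (by omega)).le
      (hadj i (by omega)).symm (hadj (i + 1) (by omega)) (fun h => ?_) hy
    have := hinj i (by omega) (i + 2) (by omega) h
    omega
  have hnadj : ∀ i j, i + 2 ≤ j → j ≤ l → ¬ G.Adj (v i) (v j) := by
    intro i j hij hj h
    have := hconn.eq_succ_of_adj_of_geodesic hadj hgeo (by omega) hj h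
    omega
  have hstart : G.degree (v 0) ≤ 2 :=
    hric.degree_le_two_of_chain hconn (b := v 1) (c := v 2) (d := v 3) (e := v 4)
      (hadj 0 (by omega)) (hadj 1 (by omega))
      (fun h => by have := hinj 0 (by omega) 2 (by omega) h; omega)
      (hnbr 0 (by omega)) (hnbr 1 (by omega)) (hnbr 2 (by omega))
      (hnadj 0 2 (by omega) (by omega)) (hnadj 0 3 (by omega) (by omega))
      (hnadj 0 4 (by omega) (by omega))
  have hsix : G.degree (v 6) ≤ 2 :=
    hric.degree_le_two_of_chain hconn (b := v 5) (c := v 4) (d := v 3) (e := v 2)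
      (hadj 5 (by omega)).symm (hadj 4 (by omega)).symm
      (fun h => by have := hinj 6 (by omega) 4 (by omega) h; omega)
      (fun y hy => (hnbr 4 (by omega) y hy).symm) (fun y hy => (hnbr 3 (by omega) y hy).symm)
      (fun y hy => (hnbr 2 (by omega) y hy).symm)
      (fun h => hnadj 4 6 (by omega) (by omega) h.symm)
      (fun h => hnadj 3 6 (by omega) (by omega) h.symm)
      (fun h => hnadj 2 6 (by omega) (by omega) h.symm)
  have hnear : ∀ i ≤ 6, G.degree (v i) ≤ 2 := by
    intro i hi
    rcases Nat.eq_zero_or_pos i with rfl | h₀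
    · exact hstart
    · rcases Nat.lt_or_eq_of_le hi with h₆ | rfl
      · exact (hdeg2 i h₀ (by omega)).le
      · exact hsix
  have hball : ∀ n ≤ 3, ∀ y, G.dist y (v 3) = n → ∃ i, 3 ≤ i + n ∧ i ≤ 3 + n ∧ y = v i := by
    intro n
    induction n with
    | zero => exact fun _ y hy => ⟨3, by omega, by omega, hconn.dist_eq_zero_iff.mp hy⟩
    | succ n ih =>
      intro hn y hy
      obtain ⟨w, hyw, hw⟩ := hconn.exists_adj_dist_succ_eq hy
      obtain ⟨i, hi₁, hi₂, rfl⟩ := ih (by omega) w hw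
      obtain ⟨k, rfl⟩ := Nat.exists_eq_add_of_le' (show 1 ≤ i by omega)
      rcases hnbr k (by omega) y hyw.symm with rfl | rfl
      exacts [⟨k, by omega, by omega, rfl⟩, ⟨k + 2, by omega, by omega, rfl⟩]
  induction hn : G.dist x (v 3) using Nat.strong_induction_on generalizing x with
  | _ n ih =>
    rcases Nat.lt_or_ge n 4 with hlt | hge
    · obtain ⟨i, -, hi, rfl⟩ := hball n (by omega) x hn
      exact hnear i (by omega)
    obtain ⟨m, rfl⟩ := Nat.exists_eq_add_of_le' hge
    obtain ⟨b, hxb, hb⟩ := hconn.exists_adj_dist_succ_eq hn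
    obtain ⟨c, hbc, hc⟩ := hconn.exists_adj_dist_succ_eq hb
    obtain ⟨d, hcd, hd⟩ := hconn.exists_adj_dist_succ_eq hc
    obtain ⟨e, hde, he⟩ := hconn.exists_adj_dist_succ_eq hd
    have hclose : ∀ y, G.Adj x y → m + 3 ≤ G.dist y (v 3) := by
      intro y hy
      have := hconn.dist_triangle (u := x) (v := y) (w := v 3)
      rw [dist_eq_one_iff_adj.mpr hy] at this
      omega
    have hne : ∀ {p q : V}, G.dist p (v 3) ≠ G.dist q (v 3) → p ≠ q := by
      rintro p q h rfl
      exact h rfl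
    refine hric.degree_le_two_of_chain hconn hxb hbc (hne (by omega))
      (fun y => eq_or_eq_of_adj_of_degree_le_two (ih _ (by omega) b hb) hxb.symm hbc
        (hne (by omega)))
      (fun y => eq_or_eq_of_adj_of_degree_le_two (ih _ (by omega) c hc) hbc.symm hcd
        (hne (by omega)))
      (fun y => eq_or_eq_of_adj_of_degree_le_two (ih _ (by omega) d hd) hcd.symm hde
        (hne (by omega)))
      (fun h => ?_) (fun h => ?_) (fun h => ?_) <;>
    · have := hclose _ h
      omega

/-- Let `P = v 0, …, v l` (`l ≥ 6`) be a diameter path of a finite,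
connected simple graph `G` with maximum degree at most 3 and nonnegative Ricci curvature.
If all interior vertices of `P` have degree 2, then `G` is the path `P` itself or `G` is
isomorphic to a cycle graph. -/
theorem diameter_path_interior_degree_two (G : SimpleGraph V) [Fintype V] [G.LocallyFinite]
    (hconn : G.Connected) (hdeg : ∀ x : V, G.degree x ≤ 3) (hric : NonnegRicci G)
    (l : ℕ) (hl : 6 ≤ l) (v : ℕ → V)
    (hadj : ∀ i < l, G.Adj (v i) (v (i + 1)))
    (hinj : ∀ i ≤ l, ∀ j ≤ l, v i = v j → i = j)
    (hgeo : G.dist (v 0) (v l) = l)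
    (hdiam : ∀ x y : V, G.dist x y ≤ l)
    (hdeg2 : ∀ i : ℕ, 1 ≤ i → i ≤ l - 1 → G.degree (v i) = 2) :
    ((∀ x : V, ∃ i ≤ l, x = v i) ∧
      (∀ x y : V, G.Adj x y ↔
        ∃ i < l, (x = v i ∧ y = v (i + 1)) ∨ (x = v (i + 1) ∧ y = v i))) ∨
      (∃ n : ℕ, 3 ≤ n ∧ Nonempty (G ≃g cycleGraph n)) := by
  classical
  have hdeg' : ∀ x, G.degree x ≤ 2 :=
    hric.degree_le_two_of_geodesic hconn hl hadj hinj hgeo hdeg2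
  by_cases hcyc : G.IsAcyclic
  · left
    have : Nontrivial V := ⟨v 0, v 1, (hadj 0 (by omega)).ne⟩
    obtain ⟨z, hz⟩ := (IsTree.mk hconn hcyc).exists_vert_degree_one_of_nontrivial
    replace hz : G.degree z ≤ 1 := by
      apply le_of_eq
      convert hz
    have hdist : Function.Injective fun x => (⟨G.dist x z, Nat.lt_succ_of_le (hdiam x z)⟩ :
        Fin (l + 1)) := fun x y h =>
      hconn.dist_injective_of_degree_le_one hdeg' hz (Fin.mk.inj h)
    have hv : Function.Injective fun i : Fin (l + 1) => v i := fun i j h =>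
      Fin.ext (hinj i (by omega) j (by omega) h)
    have hbij := (Fintype.bijective_iff_injective_and_card fun i : Fin (l + 1) => v i).mpr
      ⟨hv, le_antisymm (Fintype.card_le_of_injective _ hv) (Fintype.card_le_of_injective _ hdist)⟩
    have hcover : ∀ x : V, ∃ i ≤ l, x = v i := by
      intro x
      obtain ⟨i, hi⟩ := hbij.surjective x
      exact ⟨i, by omega, hi.symm⟩
    refine ⟨hcover, fun x y => ⟨fun h => ?_, ?_⟩⟩
    · obtain ⟨i, hi, rfl⟩ := hcover x
      obtain ⟨j, hj, rfl⟩ := hcover y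
      rcases lt_trichotomy i j with hij | rfl | hij
      · obtain rfl := hconn.eq_succ_of_adj_of_geodesic hadj hgeo hij hj h
        exact ⟨i, by omega, .inl ⟨rfl, rfl⟩⟩
      · exact (h.ne rfl).elim
      · obtain rfl := hconn.eq_succ_of_adj_of_geodesic hadj hgeo hij hi h.symm
        exact ⟨j, by omega, .inr ⟨rfl, rfl⟩⟩
    · rintro ⟨i, hi, ⟨rfl, rfl⟩ | ⟨rfl, rfl⟩⟩
      exacts [hadj i hi, (hadj i hi).symm]
  · exact .inr (hconn.exists_iso_cycleGraph hdeg' hcyc)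
end
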